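/- Let K be an algebraically closed field and n ≥ 2, m ≥ 1 integers, and let r be the Krull dimension of R(n,m) = K[Mat_{n,n}^m]^{SL_n × SL_n}. Then there exist r homogeneous invariants f_1,...,f_r ∈ R(n,m), each of degree n(n−1), whose common zero set in Mat_{n,n}^m equals the null cone N(SL_n × SL_n, Mat_{n,n}^m), i.e. equals the common zero set of all homogeneous invariants of positive degree in R(n,m). -/

import Mathlib

open MvPolynomial Matrix

/-- Coordinate functions of an `m`-tuple of `n × n` matrices. -/
def matCoords {K : Type} [Field K] {n m : ℕ} (X : Fin m → Matrix (Fin n) (Fin n) K) :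
    Fin m × Fin n × Fin n → K :=
  fun p => X p.1 p.2.1 p.2.2

/-- The ring of matrix semi-invariants `R(n,m) = K[Mat_{n,n}^m]^{SL_n × SL_n}`, where
`(A,B)` acts by `(X_1, …, X_m) ↦ (A X_1 B⁻¹, …, A X_m B⁻¹)`. -/
noncomputable def matrixSemiInvariants (K : Type) [Field K] (n m : ℕ) :
    Subalgebra K (MvPolynomial (Fin m × Fin n × Fin n) K) :=
  ⨅ (A : SpecialLinearGroup (Fin n) K) (B : SpecialLinearGroup (Fin n) K)
    (X : Fin m → Matrix (Fin n) (Fin n) K),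
      AlgHom.equalizer
        (aeval (matCoords fun i => A.val * X i * (B⁻¹).val))
        (aeval (matCoords X))

/-- The ring of matrix invariants `S(n,m) = K[Mat_{n,n}^m]^{GL_n}`, where `A` acts by
simultaneous conjugation. -/
noncomputable def matrixInvariants (K : Type) [Field K] (n m : ℕ) :
    Subalgebra K (MvPolynomial (Fin m × Fin n × Fin n) K) :=
  ⨅ (A : GeneralLinearGroup (Fin n) K) (X : Fin m → Matrix (Fin n) (Fin n) K),
      AlgHom.equalizer
        (aeval (matCoords fun i => A.val * X i * (A⁻¹).val))
        (aeval (matCoords X))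

/-!
Suppose first that a tuple `v` shrinks a subspace `U`, that is `dim ∑ v k U < dim U`. Scaling
`∑ v k U` by `t` and `U` by `t⁻¹` is then a one-parameter family of elements of `GL_n × GL_n` which
keeps `v` polynomial in `t`, but multiplies `g v` by a negative power of `t` for every
semi-invariant `g` of positive degree. So all of these vanish at `v`.

Suppose now that `v` shrinks no subspace. The maximal rank of the blow-ups `∑ v k ⊗ T k` by
`d × d` matrices `T k` is a multiple of `d`: it is already attained on a cyclic algebra of degree
`d` with generic centre, and kernels are modules over that algebra. Given such divisibility, a
tuple whose blow-ups never have full rank shrinks the limit of a second Wong sequence. Hence some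
blow-up is invertible for arbitrarily large `d`, and invertibility descends from `d + 1` to `d` as
long as `d ≥ n - 1`. For `d = n - 1` the determinant of the blow-up is a semi-invariant of degree
`n (n - 1)` not vanishing at `v`.

Therefore the null cone is cut out by the semi-invariants of degree `n (n - 1)`. If finitely many of
them are algebraically dependent, a linear projection from a point off a homogeneous relation
replaces them by one fewer with the same common zeros. The process stops at an algebraically
independent family, which has at most `r` members.
-/

open scoped Kronecker

universe u v w

section KrullDimension

theorem ringKrullDim_le_of_isIntegral {A B : Type*} [CommRing A] [CommRing B] [Algebra A B]
    [Algebra.IsIntegral A B] (hinj : Function.Injective (algebraMap A B)) :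
    ringKrullDim A ≤ ringKrullDim B := by
  refine iSup_le fun l => ?_
  have hker : (⊥ : Ideal B).comap (algebraMap A B) ≤ l.head.asIdeal := by
    rw [Ideal.comap_bot_of_injective _ hinj]
    exact bot_le
  obtain ⟨Q, -, hQ, hQl⟩ := Ideal.exists_ideal_over_prime_of_isIntegral l.head.asIdeal ⊥ hker
  have : Q.LiesOver l.head.asIdeal := ⟨hQl.symm⟩
  obtain ⟨L, hL, -⟩ := Ideal.exists_ltSeries_of_hasGoingUp l Q
  exact hL ▸ le_iSup (fun l : LTSeries (PrimeSpectrum B) => (l.length : WithBot ℕ∞)) L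

theorem ringKrullDim_localization_le {A B : Type*} [CommRing A] [CommRing B] [Algebra A B]
    (M : Submonoid A) [IsLocalization M B] : ringKrullDim B ≤ ringKrullDim A :=
  Order.krullDim_le_of_strictMono (PrimeSpectrum.comap (algebraMap A B)) <|
    Monotone.strictMono_of_injective (fun _ _ h => Ideal.comap_mono h)
      (PrimeSpectrum.localization_comap_injective B M)

theorem natCast_le_ringKrullDim_of_algebraicIndependent {K A : Type*} [Field K] [CommRing A]
    [IsDomain A] [Algebra K A] [Algebra.FiniteType K A] {e : ℕ} {x : Fin e → A}
    (hx : AlgebraicIndependent K x) : (e : WithBot ℕ∞) ≤ ringKrullDim A := by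
  obtain ⟨s, g, hg, hint⟩ := exists_integral_inj_algHom_of_fg K A
  algebraize [g.toRingHom]
  have : IsScalarTower K (MvPolynomial (Fin s) K) A := .of_algHom g
  have hes : e ≤ s := by
    have hle := hx.lift_cardinalMk_le_trdeg
    have := (faithfulSMul_iff_algebraMap_injective (MvPolynomial (Fin s) K) A).2 hg
    rw [← (IsTranscendenceBasis.mvPolynomial (Fin s) K).algebraMap_comp (A := A)
      |>.lift_cardinalMk_eq_trdeg] at hle
    simpa using hle
  calc (e : WithBot ℕ∞) ≤ s := mod_cast hes
    _ = ringKrullDim (MvPolynomial (Fin s) K) := by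
      simp [MvPolynomial.ringKrullDim_of_isNoetherianRing]
    _ ≤ ringKrullDim A := ringKrullDim_le_of_isIntegral hg

open TensorProduct in
theorem exists_algHom_isTranscendenceBasis {ι : Type u} {K : Type v} {T : Type w} [Field K]
    [CommRing T] [Algebra K T] [Algebra.FiniteType K T] {x : ι → T}
    (hx : AlgebraicIndependent K x) :
    ∃ (L : Type (max u v w)) (_ : Field L) (_ : Algebra K L) (φ : T →ₐ[K] L),
      IsTranscendenceBasis K (φ ∘ x) := by
  let P := MvPolynomial ι K
  let F := FractionRing P
  algebraize [(aeval x : P →ₐ[K] T).toRingHom]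
  have : IsScalarTower K P T := .of_algHom (aeval x)
  have : Algebra.FiniteType P T := .of_restrictScalars_finiteType K P T
  have : Nontrivial (F ⊗[P] T) :=
    (Algebra.TensorProduct.includeLeft_injective (S := F) (R := P) (A := F) (B := T) hx).nontrivial
  obtain ⟨M, hM⟩ := Ideal.exists_maximal (F ⊗[P] T)
  let : Field ((F ⊗[P] T) ⧸ M) := Ideal.Quotient.field M
  have : Module.Finite F ((F ⊗[P] T) ⧸ M) := finite_of_finite_type_of_isJacobsonRing F _
  have : Algebra.IsAlgebraic P ((F ⊗[P] T) ⧸ M) :=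
    (IsFractionRing.comap_isAlgebraic_iff (A := P) (K := F)).2 (.of_finite F _)
  have : FaithfulSMul P ((F ⊗[P] T) ⧸ M) := by
    rw [faithfulSMul_iff_algebraMap_injective, IsScalarTower.algebraMap_eq P F]
    exact (algebraMap F _).injective.comp (IsFractionRing.injective P F)
  let φ : T →ₐ[P] (F ⊗[P] T) ⧸ M :=
    (Ideal.Quotient.mkₐ P M).comp Algebra.TensorProduct.includeRight
  refine ⟨(F ⊗[P] T) ⧸ M, inferInstance, inferInstance, φ.restrictScalars K, ?_⟩
  convert! (IsTranscendenceBasis.mvPolynomial ι K).algebraMap_comp (A := (F ⊗[P] T) ⧸ M) using 1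
  ext i
  exact (congrArg φ (aeval_X x i).symm).trans (φ.commutes (X i))

theorem exists_mem_forall_isIntegral {K L T : Type*} [Field K] [Field L] [Algebra K L] [CommRing T]
    [Algebra K T] [Algebra.FiniteType K T] (P : Subalgebra K L) [Algebra.IsAlgebraic P L]
    (φ : T →ₐ[K] L) :
    ∃ f ∈ P, f ≠ 0 ∧ ∀ A : Subalgebra K L, P ≤ A → f⁻¹ ∈ A → ∀ t, IsIntegral A (φ t) := by
  classical
  obtain ⟨S, hS⟩ := Algebra.FiniteType.out (R := K) (A := T)
  obtain ⟨f, hf0, hf⟩ := Algebra.IsAlgebraic.exists_integral_multiples (R := P) (S.image φ)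
  refine ⟨f, f.2, by simpa using hf0, fun A hPA hfA t => ?_⟩
  have hT : (⊤ : Subalgebra K T) ≤ ((integralClosure A L).restrictScalars K).comap φ := by
    rw [← hS, Algebra.adjoin_le_iff]
    intro s hs
    have hfs : IsIntegral A ((f : L) * φ s) :=
      (hf _ (Finset.mem_image_of_mem φ hs)).map_of_comp_eq (Subalgebra.inclusion hPA).toRingHom
        (RingHom.id L) rfl
    have hfinv : IsIntegral A (f : L)⁻¹ := isIntegral_algebraMap (x := (⟨(f : L)⁻¹, hfA⟩ : A))
    have hφs := hfinv.mul hfs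
    rwa [inv_mul_cancel_left₀ (by simpa using hf0)] at hφs
  exact hT (Algebra.mem_top (x := t))

theorem natCast_le_ringKrullDim_of_isIntegral_adjoin_inv {K L R : Type*} [Field K] [Field L]
    [Algebra K L] [CommRing R] [Algebra K R] (φ : R →ₐ[K] L) {e : ℕ} {x : Fin e → R}
    (hx : AlgebraicIndependent K (φ ∘ x)) {f : R} (hf : φ f ≠ 0)
    (hint : ∀ a, IsIntegral (Algebra.adjoin K (insert (φ f)⁻¹ (Set.range (φ ∘ x)))) (φ a)) :
    (e : WithBot ℕ∞) ≤ ringKrullDim R := by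
  set A := Algebra.adjoin K (insert (φ f)⁻¹ (Set.range (φ ∘ x)))
  let ψ : Localization.Away f →ₐ[K] L := IsLocalization.liftAlgHom (M := .powers f) (f := φ) <| by
    rintro ⟨_, k, rfl⟩
    simpa only [map_pow] using hf.isUnit.pow k
  have hψ : ∀ a : R, ψ (algebraMap R _ a) = φ a := fun a => IsLocalization.lift_eq _ a
  have hψinv : ψ (IsLocalization.Away.invSelf f) = (φ f)⁻¹ := by
    refine eq_inv_of_mul_eq_one_right ?_
    rw [← hψ, ← map_mul, IsLocalization.Away.mul_invSelf, map_one]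
  have hA : A ≤ ψ.range := Algebra.adjoin_le <| Set.insert_subset ⟨_, hψinv⟩ <|
    Set.range_subset_iff.2 fun i => ⟨_, hψ (x i)⟩
  algebraize [(Subalgebra.inclusion hA).toRingHom]
  have hinv : IsIntegral A (φ f)⁻¹ :=
    isIntegral_algebraMap (x := (⟨_, Algebra.subset_adjoin (.inl rfl)⟩ : A))
  have : IsScalarTower A ψ.range L := .of_algebraMap_eq fun _ => rfl
  have : Algebra.IsIntegral A ψ.range := by
    refine ⟨?_⟩
    rintro ⟨_, b, rfl⟩
    obtain ⟨k, a, hab⟩ := IsLocalization.Away.surj f b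
    have hb : ψ b = φ a * (φ f)⁻¹ ^ k := by
      rw [inv_pow, eq_mul_inv_iff_mul_eq₀ (pow_ne_zero k hf), ← hψ, ← hψ, ← map_pow, ← map_mul, hab]
    have hbint : IsIntegral A (ψ b) := hb ▸ (hint a).mul (hinv.pow k)
    exact IsIntegral.tower_bot (A := ψ.range) (B := L) Subtype.val_injective hbint
  have : Algebra.FiniteType K A := A.fg_iff_finiteType.1 <|
    Subalgebra.fg_def.2 ⟨_, (Set.finite_range _).insert _, rfl⟩
  have hxA : AlgebraicIndependent K fun i =>
      (⟨φ (x i), Algebra.subset_adjoin (.inr ⟨i, rfl⟩)⟩ : A) := .of_comp A.val hx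
  calc (e : WithBot ℕ∞) ≤ ringKrullDim A := natCast_le_ringKrullDim_of_algebraicIndependent hxA
    _ ≤ ringKrullDim ψ.range := ringKrullDim_le_of_isIntegral (Subalgebra.inclusion_injective hA)
    _ ≤ ringKrullDim (Localization.Away f) :=
      ringKrullDim_le_of_surjective ψ.rangeRestrict.toRingHom ψ.rangeRestrict_surjective
    _ ≤ ringKrullDim R := ringKrullDim_localization_le (.powers f)

-- `R` need not be finitely generated. After specializing `T` to a field algebraic over `K(x)`, the
-- image of `R` becomes integral over `K[x]` once a single element of `K[x]` is inverted.
theorem natCast_le_ringKrullDim_subalgebra {K T : Type*} [Field K] [CommRing T]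
    [Algebra K T] [Algebra.FiniteType K T] (R : Subalgebra K T) {e : ℕ} {x : Fin e → R}
    (hx : AlgebraicIndependent K x) : (e : WithBot ℕ∞) ≤ ringKrullDim R := by
  obtain ⟨L, _, _, φ, hφ⟩ :=
    exists_algHom_isTranscendenceBasis (hx.map' (f := R.val) Subtype.val_injective)
  have hφR : IsTranscendenceBasis K (φ.comp R.val ∘ x) := hφ
  have := hφR.isAlgebraic
  obtain ⟨f, hfx, hf0, hf⟩ :=
    exists_mem_forall_isIntegral (Algebra.adjoin K (Set.range (φ.comp R.val ∘ x))) φ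
  have hxR : Algebra.adjoin K (Set.range (φ.comp R.val ∘ x)) ≤ (φ.comp R.val).range :=
    Algebra.adjoin_le <| Set.range_subset_iff.2 fun i => ⟨x i, rfl⟩
  obtain ⟨r, rfl⟩ := hxR hfx
  exact natCast_le_ringKrullDim_of_isIntegral_adjoin_inv _ hφR.1 hf0 fun a =>
    hf _ (Algebra.adjoin_mono (Set.subset_insert _ _)) (Algebra.subset_adjoin (.inl rfl)) a

end KrullDimension

section MatrixRank

variable {K a b : Type*} [Field K]

theorem exists_matrix_mul_eq_one_and_range_eq [Fintype a] (W : Submodule K (a → K)) {r : ℕ}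
    (hr : Module.finrank K W = r) :
    ∃ (C : Matrix a (Fin r) K) (R : Matrix (Fin r) a K),
      R * C = 1 ∧ LinearMap.range C.mulVecLin = W := by
  classical
  obtain ⟨p, hp⟩ := W.subtype.exists_leftInverse_of_injective W.ker_subtype
  let e := (Module.finBasisOfFinrankEq K W hr).equivFun
  refine ⟨LinearMap.toMatrix' (W.subtype ∘ₗ e.symm.toLinearMap),
    LinearMap.toMatrix' (e.toLinearMap ∘ₗ p), ?_, ?_⟩
  · rw [← LinearMap.toMatrix'_comp, LinearMap.comp_assoc, ← LinearMap.comp_assoc _ _ p, hp,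
      LinearMap.id_comp, LinearEquiv.comp_symm, LinearMap.toMatrix'_id]
  · rw [← toLin'_apply', toLin'_toMatrix', LinearMap.range_comp_of_range_eq_top _ e.symm.range,
      Submodule.range_subtype]

theorem rank_add_finrank_ker_mulVecLin [Fintype b] (M : Matrix a b K) :
    M.rank + Module.finrank K (LinearMap.ker M.mulVecLin) = Fintype.card b := by
  rw [Matrix.rank, LinearMap.finrank_range_add_finrank_ker, Module.finrank_fintype_fun_eq_card]

theorem le_rank_of_mul_mul_eq_one [Fintype a] [Fintype b] {ρ : ℕ} {M : Matrix a b K}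
    {P : Matrix (Fin ρ) a K} {Q : Matrix b (Fin ρ) K} (h : P * M * Q = 1) : ρ ≤ M.rank := by
  calc ρ = (P * M * Q).rank := by rw [h, rank_one, Fintype.card_fin]
    _ ≤ (P * M).rank := rank_mul_le_left _ _
    _ ≤ M.rank := rank_mul_le_right _ _

theorem exists_mul_mul_eq_one [Fintype a] [Fintype b] (M : Matrix a b K) :
    ∃ (P : Matrix (Fin M.rank) a K) (Q : Matrix b (Fin M.rank) K), P * M * Q = 1 := by
  obtain ⟨C, R, hRC, hC⟩ :=
    exists_matrix_mul_eq_one_and_range_eq (LinearMap.range M.mulVecLin) (r := M.rank) rfl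
  have hcol : ∀ j, ∃ y, M *ᵥ y = C.col j := fun j => by
    have hj : C.col j ∈ LinearMap.range C.mulVecLin := ⟨Pi.single j 1, by simp⟩
    rwa [hC] at hj
  choose y hy using hcol
  have hQ : M * (of y)ᵀ = C := ext_col fun j => hy j
  exact ⟨R, (of y)ᵀ, by rw [Matrix.mul_assoc, hQ, hRC]⟩

theorem mul_mul_eq_of_range_le {r : Type*} [Fintype a] [Fintype b] [Fintype r] [DecidableEq r]
    {C : Matrix a r K} {R : Matrix r a K} (hRC : R * C = 1) {M : Matrix a b K}
    (hM : LinearMap.range M.mulVecLin ≤ LinearMap.range C.mulVecLin) : C * R * M = M := by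
  refine mulVec_injective <| funext fun y => ?_
  obtain ⟨z, hz⟩ := hM (LinearMap.mem_range_self _ y)
  rw [mulVecLin_apply, mulVecLin_apply] at hz
  rw [← mulVec_mulVec, ← hz, mulVec_mulVec, Matrix.mul_assoc, hRC, Matrix.mul_one]

theorem exists_eq_mul [Finite a] [Fintype b] (M : Matrix a b K) :
    ∃ (C : Matrix a (Fin M.rank) K) (D : Matrix (Fin M.rank) b K), M = C * D := by
  cases nonempty_fintype a
  obtain ⟨C, R, hRC, hC⟩ :=
    exists_matrix_mul_eq_one_and_range_eq (LinearMap.range M.mulVecLin) (r := M.rank) rfl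
  exact ⟨C, R * M, by rw [← Matrix.mul_assoc, mul_mul_eq_of_range_le hRC hC.ge]⟩

theorem rank_map_algebraMap [Finite a] [Fintype b] {L : Type*} [Field L] [Algebra K L]
    (M : Matrix a b K) : (M.map (algebraMap K L)).rank = M.rank := by
  cases nonempty_fintype a
  refine le_antisymm ?_ ?_
  · obtain ⟨C, D, hM⟩ := exists_eq_mul M
    rw [congrArg (·.map (algebraMap K L)) hM, Matrix.map_mul]
    exact (rank_mul_le_left _ _).trans ((rank_le_card_width _).trans_eq (Fintype.card_fin _))
  · obtain ⟨P, Q, hPQ⟩ := exists_mul_mul_eq_one M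
    refine le_rank_of_mul_mul_eq_one (P := P.map (algebraMap K L))
      (Q := Q.map (algebraMap K L)) ?_
    rw [← Matrix.map_mul, ← Matrix.map_mul, hPQ, Matrix.map_one _ (map_zero _) (map_one _)]

theorem finite_setOf_rank_add_smul_lt [Finite a] [Fintype b] (M N : Matrix a b K) :
    {t : K | (M + t • N).rank < M.rank}.Finite := by
  cases nonempty_fintype a
  obtain ⟨P, Q, hPQ⟩ := exists_mul_mul_eq_one M
  let p : Polynomial K :=
    (1 + (Polynomial.X : Polynomial K) • (P * N * Q).map Polynomial.C).det
  have hp : ∀ t, p.eval t = (P * (M + t • N) * Q).det := fun t => by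
    rw [Matrix.mul_add, Matrix.add_mul, hPQ, Matrix.mul_smul, Matrix.smul_mul]
    simp [p, eval_det, ← smul_eq_mul_diagonal, -Matrix.map_mul]
  have hp0 : p ≠ 0 := fun h => by
    simpa [h, hPQ] using hp 0
  refine (Polynomial.finite_setOfPred_isRoot hp0).subset fun t ht => ?_
  rw [Set.mem_ofPred_eq, Polynomial.IsRoot, hp]
  contrapose! ht
  rw [Set.mem_ofPred_eq, not_lt]
  refine le_rank_of_mul_mul_eq_one (P := P) (Q := Q * (P * (M + t • N) * Q)⁻¹) ?_
  rw [← Matrix.mul_assoc, mul_nonsing_inv _ ht.isUnit]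

section Generic

variable [Finite a] [Fintype b] [Infinite K] {L V : Type*} [Field L] [Algebra K L]
  [AddCommGroup V] [Module L V] [Module K V]

theorem exists_rank_le_rank_algebraMap_smul_add (M N : Matrix a b L) (c : L) :
    ∃ t : K, (c • N + M).rank ≤ (algebraMap K L t • N + M).rank := by
  have hinj : Function.Injective fun t => algebraMap K L t - c :=
    (sub_left_injective).comp (algebraMap K L).injective
  obtain ⟨t, ht⟩ := ((finite_setOf_rank_add_smul_lt (c • N + M) N).preimage
    hinj.injOn).exists_notMem
  refine ⟨t, ?_⟩
  rw [Set.mem_preimage, Set.mem_ofPred_eq, not_lt] at ht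
  convert! ht using 2
  module

theorem exists_mem_rank_le_rank [IsScalarTower K L V] (B : Submodule K V) (f : V →ₗ[L] Matrix a b L)
    {x : V} (hx : x ∈ Submodule.span L (B : Set V)) : ∃ y ∈ B, (f x).rank ≤ (f y).rank := by
  suffices ∀ z, ∃ y ∈ B, (f (x + z)).rank ≤ (f (y + z)).rank by
    simpa only [add_zero] using this 0
  induction hx using Submodule.closure_induction with
  | zero => exact fun z => ⟨0, B.zero_mem, le_rfl⟩
  | add x x' _ _ hx hx' =>
    intro z
    obtain ⟨y, hy, hle⟩ := hx (x' + z)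
    obtain ⟨y', hy', hle'⟩ := hx' (y + z)
    refine ⟨y + y', B.add_mem hy hy', ?_⟩
    rw [add_assoc]
    refine hle.trans ?_
    rwa [add_left_comm, add_assoc y, add_left_comm y]
  | smul_mem c y hy =>
    intro z
    obtain ⟨t, ht⟩ := exists_rank_le_rank_algebraMap_smul_add (K := K) (f z) (f y) c
    refine ⟨t • y, B.smul_mem t hy, ?_⟩
    rwa [← algebraMap_smul L t y, map_add, map_add, map_smul, map_smul]

end Generic

theorem exists_rank_le_rank_and_rank_le_rank [Finite a] [Fintype b] [Infinite K] {a' b' V : Type*}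
    [Finite a'] [Fintype b'] [AddCommGroup V] [Module K V]
    (f : V →ₗ[K] Matrix a b K) (g : V →ₗ[K] Matrix a' b' K) (x y : V) :
    ∃ z, (f x).rank ≤ (f z).rank ∧ (g y).rank ≤ (g z).rank := by
  have hinj : Function.Injective fun t : K => t - 1 := sub_left_injective
  obtain ⟨t, ht⟩ := ((finite_setOf_rank_add_smul_lt (f x) (f (y - x))).union
    ((finite_setOf_rank_add_smul_lt (g y) (g (y - x))).preimage hinj.injOn)).exists_notMem
  rw [Set.mem_union, not_or] at ht
  refine ⟨x + t • (y - x), by simpa using ht.1, ?_⟩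
  have hz : x + t • (y - x) = y + (t - 1) • (y - x) := by module
  simpa [hz] using ht.2

end MatrixRank

section CyclicAlgebra

section LaurentSeries

variable {F : Type*} [Field F] (τ : F →+* F)

/-- The action of a ring endomorphism on the coefficients of Laurent series. -/
noncomputable def laurentMap : LaurentSeries F →+* LaurentSeries F where
  toFun p := p.map τ
  map_one' := HahnSeries.map_one τ.toMonoidWithZeroHom
  map_mul' _ _ := HahnSeries.map_mul (τ : F →ₙ+* F)
  map_zero' := HahnSeries.map_zero (τ : ZeroHom F F)
  map_add' _ _ := HahnSeries.map_add (τ : F →+ F)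

theorem laurentMap_pow (i : ℕ) : laurentMap τ ^ i = laurentMap (τ ^ i) := by
  induction i with
  | zero => rfl
  | succ i ih => rw [pow_succ, pow_succ, ih]; rfl

theorem order_laurentMap (p : LaurentSeries F) : (laurentMap τ p).order = p.order := by
  rcases eq_or_ne p 0 with rfl | hp
  · rw [map_zero]
  have hτp : laurentMap τ p ≠ 0 := (map_ne_zero _).2 hp
  have hcoeff : ∀ n, (laurentMap τ p).coeff n = τ (p.coeff n) := fun _ => rfl
  refine le_antisymm (HahnSeries.order_le_of_coeff_ne_zero ?_)
    (HahnSeries.order_le_of_coeff_ne_zero fun h => ?_)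
  · rw [hcoeff, map_ne_zero]
    exact HahnSeries.coeff_order_eq_zero.not.2 hp
  · refine HahnSeries.coeff_order_eq_zero.not.2 hτp ?_
    rw [hcoeff, h, map_zero]

theorem order_prod_laurentMap_pow {p : LaurentSeries F} (hp : p ≠ 0) (d : ℕ) :
    (∏ i ∈ Finset.range d, (laurentMap τ ^ i) p).order = d * p.order := by
  induction d with
  | zero => simp
  | succ d ih =>
    have hne : ∀ i, (laurentMap τ ^ i) p ≠ 0 := fun i => (map_ne_zero _).2 hp
    rw [Finset.prod_range_succ, HahnSeries.order_mul (Finset.prod_ne_zero_iff.2 fun i _ => hne i)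
      (hne d), ih, laurentMap_pow, order_laurentMap]
    push_cast
    ring

theorem dvd_of_single_pow_eq_prod_laurentMap_pow {d w : ℕ} {p : LaurentSeries F} (hd : d ≠ 0)
    (h : HahnSeries.single (1 : ℤ) (1 : F) ^ w = ∏ i ∈ Finset.range d, (laurentMap τ ^ i) p) :
    d ∣ w := by
  have hp : p ≠ 0 := by
    rintro rfl
    simp only [map_zero, Finset.prod_const, Finset.card_range,
      zero_pow hd] at h
    exact pow_ne_zero w (HahnSeries.single_ne_zero one_ne_zero) h
  have horder := congrArg HahnSeries.order h
  rw [order_prod_laurentMap_pow τ hp, HahnSeries.order_pow, HahnSeries.order_single one_ne_zero]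
    at horder
  exact Int.natCast_dvd_natCast.1 ⟨p.order, by simpa using horder⟩

end LaurentSeries

/-- A field `L` with an endomorphism `σ` of order dividing `d` and a `σ`-fixed element `s` such that
the only powers of `s` that are `σ`-norms are the powers of `s ^ d`. The `σ`-orbit `x` of length `d`
makes the cyclic algebra `(L, σ, s)` split over `L`. -/
structure CyclicNormData (K : Type*) [Field K] (d : ℕ) (L : Type*) [Field L] [Algebra K L] where
  σ : L →+* L
  s : L
  x : ZMod d → L
  σ_algebraMap : ∀ c, σ (algebraMap K L c) = algebraMap K L c
  σ_pow : σ ^ d = 1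
  σ_s : σ s = s
  s_ne_zero : s ≠ 0
  σ_x : ∀ i, σ (x (i + 1)) = x i
  x_injective : Function.Injective x
  dvd_of_pow_eq_norm : ∀ w p, s ^ w = ∏ i ∈ Finset.range d, (σ ^ i) p → d ∣ w

theorem exists_fractionRing_endomorphism_pow_eq_one (K : Type*) [Field K] (d : ℕ) :
    ∃ τ : FractionRing (MvPolynomial (ZMod d) K) →+* FractionRing (MvPolynomial (ZMod d) K),
      (∀ p, τ (algebraMap (MvPolynomial (ZMod d) K) _ p) = algebraMap _ _ (rename (· - 1) p)) ∧
        τ ^ d = 1 := by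
  let P := MvPolynomial (ZMod d) K
  let F := FractionRing P
  have hinj : Function.Injective (rename (· - 1) : P →ₐ[K] P).toRingHom :=
    rename_injective _ sub_left_injective
  let τ : F →+* F := IsFractionRing.map hinj
  have hτ : ∀ p : P, τ (algebraMap P F p) = algebraMap P F (rename (· - 1) p) :=
    fun p => IsLocalization.map_eq _ p
  have hτpow : ∀ k : ℕ, ∀ p : P, (τ ^ k) (algebraMap P F p) =
      algebraMap P F (rename (· - (k : ZMod d)) p) := fun k p => by
    induction k with
    | zero =>
      simp only [Nat.cast_zero, sub_zero]
      exact congrArg (algebraMap P F) (rename_id_apply p).symm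
    | succ k ih =>
      rw [pow_succ', RingHom.mul_def, RingHom.comp_apply, ih, hτ, rename_rename]
      congr 3
      funext i
      simp only [Function.comp_apply, Nat.cast_succ, sub_sub]
  refine ⟨τ, hτ, IsLocalization.ringHom_ext (nonZeroDivisors P) <| RingHom.ext fun p => ?_⟩
  rw [RingHom.comp_apply, hτpow]
  simp only [CharP.cast_eq_zero, sub_zero]
  exact congrArg (algebraMap P F) (rename_id_apply p)

theorem exists_cyclicNormData (K : Type u) [Field K] (d : ℕ) [NeZero d] :
    ∃ (L : Type u) (_ : Field L) (_ : Algebra K L), Nonempty (CyclicNormData K d L) := by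
  let P := MvPolynomial (ZMod d) K
  let F := FractionRing P
  obtain ⟨τ, hτ, hτd⟩ := exists_fractionRing_endomorphism_pow_eq_one K d
  let _ : Algebra K (LaurentSeries F) := (HahnSeries.C.comp (algebraMap K F)).toAlgebra
  refine ⟨LaurentSeries F, inferInstance, inferInstance, ⟨{
    σ := laurentMap τ
    s := HahnSeries.single 1 1
    x := fun i => HahnSeries.C (algebraMap P F (X i))
    σ_algebraMap := fun c => (HahnSeries.map_C _ (τ : F →+* F)).trans ?_
    σ_pow := by rw [laurentMap_pow, hτd]; rfl
    σ_s := (HahnSeries.map_single (τ : ZeroHom F F)).trans (congrArg _ (map_one τ))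
    s_ne_zero := HahnSeries.single_ne_zero one_ne_zero
    σ_x := fun i => (HahnSeries.map_C _ (τ : F →+* F)).trans ?_
    x_injective := HahnSeries.C_injective.comp <|
      (IsFractionRing.injective P F).comp (X_injective (R := K))
    dvd_of_pow_eq_norm := fun w p => dvd_of_single_pow_eq_prod_laurentMap_pow _ (NeZero.ne d) }⟩⟩
  · rw [IsScalarTower.algebraMap_apply K P F, hτ, algebraMap_eq, rename_C]
    rfl
  · rw [hτ, rename_X, add_sub_cancel_right]

end CyclicAlgebra

section CyclicShift

variable {d : ℕ} [NeZero d] {L : Type*} [Field L]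

/-- The cyclic shift of `ZMod d` with weight `s` on the edge from `0` to `1` and weight `1` on the
other edges, so that its `d`-th power is the scalar `s`. -/
def cyclicShift (d : ℕ) [NeZero d] (s : L) : Matrix (ZMod d) (ZMod d) L :=
  of fun i j => if j = i + 1 then (if i = 0 then s else 1) else 0

theorem cyclicShift_mulVec (s : L) (v : ZMod d → L) (i : ZMod d) :
    (cyclicShift d s *ᵥ v) i = (if i = 0 then s else 1) * v (i + 1) := by
  simp [cyclicShift, mulVec, dotProduct]

theorem cyclicShift_pow_mulVec (s : L) (j : ℕ) (v : ZMod d → L) (i : ZMod d) :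
    (cyclicShift d s ^ j *ᵥ v) i =
      (∏ t ∈ Finset.range j, if i + t = 0 then s else 1) * v (i + j) := by
  induction j generalizing v with
  | zero => simp
  | succ j ih =>
    rw [pow_succ, ← mulVec_mulVec, ih, cyclicShift_mulVec, Finset.prod_range_succ, mul_assoc,
      Nat.cast_succ, add_assoc]

theorem prod_range_ite_add_eq_zero (s : L) (i : ZMod d) :
    (∏ t ∈ Finset.range d, if i + t = 0 then s else 1) = s := by
  rw [Finset.prod_eq_single_of_mem (-i).val (Finset.mem_range.2 (ZMod.val_lt _)), if_pos]
  · rw [ZMod.natCast_zmod_val, add_neg_cancel]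
  · refine fun t ht hne => if_neg fun h => hne ?_
    rw [← eq_neg_of_add_eq_zero_right h, ZMod.val_cast_of_lt (Finset.mem_range.1 ht)]

theorem cyclicShift_pow_self (s : L) :
    cyclicShift d s ^ d = s • (1 : Matrix (ZMod d) (ZMod d) L) := by
  refine mulVec_injective <| funext fun v => funext fun i => ?_
  rw [cyclicShift_pow_mulVec, prod_range_ite_add_eq_zero, CharP.cast_eq_zero, add_zero, smul_mulVec,
    one_mulVec, Pi.smul_apply, smul_eq_mul]

theorem single_mul_cyclicShift (s : L) (a b : ZMod d) :
    single a b 1 * cyclicShift d s = (if b = 0 then s else 1) • single a (b + 1) 1 := by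
  ext i j
  by_cases hi : i = a
  · subst hi
    simp [cyclicShift, single_apply, eq_comm]
  · simp [hi, Ne.symm hi]

theorem single_self_mem_adjoin_diagonal {a : Type*} [Fintype a] [DecidableEq a] {x : a → L}
    (hx : Function.Injective x) (i : a) :
    single i i 1 ∈ Algebra.adjoin L {diagonal x} := by
  have h : single i i 1 = Polynomial.aeval (diagonal x) (Lagrange.basis Finset.univ x i) := by
    rw [← diagonal_single, ← diagonalAlgHom_apply (R := L), ← diagonalAlgHom_apply (R := L) x,
      Polynomial.aeval_algHom_apply]
    congr 1
    funext j
    rw [Polynomial.aeval_fn_apply, Polynomial.coe_aeval_eq_eval]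
    rcases eq_or_ne j i with rfl | hij
    · rw [Pi.single_eq_same, Lagrange.eval_basis_self hx.injOn (Finset.mem_univ _)]
    · rw [Pi.single_eq_of_ne hij, Lagrange.eval_basis_of_ne hij.symm (Finset.mem_univ _)]
  exact h ▸ Polynomial.aeval_mem_adjoin_singleton L _

theorem adjoin_diagonal_cyclicShift_eq_top {s : L} (hs : s ≠ 0) {x : ZMod d → L}
    (hx : Function.Injective x) : Algebra.adjoin L {diagonal x, cyclicShift d s} = ⊤ := by
  set S := Algebra.adjoin L {diagonal x, cyclicShift d s}
  have hdiag (i) : single i i 1 ∈ S :=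
    Algebra.adjoin_mono (by simp) (single_self_mem_adjoin_diagonal hx i)
  have hshift : cyclicShift d s ∈ S := Algebra.subset_adjoin (by simp)
  have hsingle (i : ZMod d) (j : ℕ) : single i (i + j) 1 ∈ S := by
    induction j with
    | zero => simpa using hdiag i
    | succ j ih =>
      have hw : (if i + (j : ZMod d) = 0 then s else 1) ≠ 0 := by split_ifs <;> simp [hs]
      have h := S.smul_mem (S.mul_mem ih hshift) (if i + (j : ZMod d) = 0 then s else 1)⁻¹
      rwa [single_mul_cyclicShift, inv_smul_smul₀ hw, add_assoc, ← Nat.cast_succ] at h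
  refine eq_top_iff.2 fun T _ => ?_
  rw [matrix_eq_sum_single T]
  refine S.sum_mem fun i _ => S.sum_mem fun j _ => ?_
  have hij := S.smul_mem (hsingle i (j - i).val) (T i j)
  rwa [ZMod.natCast_zmod_val, add_sub_cancel, smul_single, smul_eq_mul, mul_one] at hij

end CyclicShift

namespace CyclicNormData

variable {K L : Type*} [Field K] [Field L] [Algebra K L]
variable {d : ℕ} [NeZero d] (D : CyclicNormData K d L)

theorem cyclicShift_map_σ : (cyclicShift d D.s).map D.σ = cyclicShift d D.s := by
  ext i j
  simp only [cyclicShift, map_apply, of_apply, apply_ite D.σ, D.σ_s, map_one, map_zero]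

/-- The cyclic algebra `(L, σ, s)` inside its splitting `Mat_d(L)`: the matrices fixed by the
semilinear automorphism `e ↦ q σ(e) q⁻¹`, where `q` is the cyclic shift of weight `s`. -/
def cyclicAlgebra : Subalgebra K (Matrix (ZMod d) (ZMod d) L) where
  carrier := {e | e * cyclicShift d D.s = cyclicShift d D.s * e.map D.σ}
  mul_mem' {e f} (he : _ = _) (hf : _ = _) := by
    rw [Set.mem_ofPred_eq, Matrix.mul_assoc, hf, ← Matrix.mul_assoc, he, Matrix.map_mul,
      Matrix.mul_assoc]
  add_mem' {e f} (he : _ = _) (hf : _ = _) := by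
    rw [Set.mem_ofPred_eq, Matrix.add_mul, he, hf, Matrix.map_add _ (map_add D.σ), Matrix.mul_add]
  algebraMap_mem' c := by
    rw [Set.mem_ofPred_eq, Algebra.commutes]
    congr 1
    ext i j
    rcases eq_or_ne i j with rfl | hij
    · simp [Matrix.algebraMap_matrix_apply, D.σ_algebraMap]
    · simp [Matrix.algebraMap_matrix_apply, hij]

theorem mem_cyclicAlgebra {e : Matrix (ZMod d) (ZMod d) L} :
    e ∈ D.cyclicAlgebra ↔ e * cyclicShift d D.s = cyclicShift d D.s * e.map D.σ :=
  Iff.rfl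

theorem diagonal_x_mem_cyclicAlgebra : diagonal D.x ∈ D.cyclicAlgebra := by
  rw [mem_cyclicAlgebra, diagonal_map (map_zero D.σ)]
  ext i j
  rw [diagonal_mul, mul_diagonal, mul_comm]
  rcases eq_or_ne j (i + 1) with rfl | hj
  · rw [D.σ_x]
  · simp [cyclicShift, hj]

theorem span_cyclicAlgebra_eq_top :
    Submodule.span L (D.cyclicAlgebra.toSubmodule : Set (Matrix (ZMod d) (ZMod d) L)) = ⊤ := by
  rw [← Algebra.top_toSubmodule,
    ← adjoin_diagonal_cyclicShift_eq_top D.s_ne_zero D.x_injective, Algebra.adjoin_eq_span]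
  refine le_antisymm ?_ (Submodule.span_mono ?_)
  · rw [← Algebra.adjoin_eq_span, adjoin_diagonal_cyclicShift_eq_top D.s_ne_zero D.x_injective]
    exact le_top
  · change Submonoid.closure _ ≤ D.cyclicAlgebra.toSubsemiring.toSubmonoid
    rw [Submonoid.closure_le, Set.insert_subset_iff, Set.singleton_subset_iff]
    exact ⟨D.diagonal_x_mem_cyclicAlgebra, congrArg _ D.cyclicShift_map_σ.symm⟩

end CyclicNormData

section Semilinear

theorem map_mulVec_comp {a b L : Type*} [Fintype b] [Field L] (σ : L →+* L) (M : Matrix a b L)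
    (v : b → L) : M.map σ *ᵥ (σ ∘ v) = σ ∘ (M *ᵥ v) :=
  funext fun i => (RingHom.map_mulVec σ M v i).symm

variable {a L : Type*} [Fintype a] [DecidableEq a] [Field L] (σ : L →+* L)

theorem exists_pow_mul_map_eq_mul {w : ℕ} {Q : Matrix a a L} {C : Matrix a (Fin w) L}
    {P : Matrix (Fin w) (Fin w) L} (hQ : Q.map σ = Q) (h : Q * C.map σ = C * P) (j : ℕ) :
    ∃ N : Matrix (Fin w) (Fin w) L,
      Q ^ j * C.map (σ ^ j) = C * N ∧ N.det = ∏ i ∈ Finset.range j, (σ ^ i) P.det := by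
  induction j with
  | zero => exact ⟨1, by rw [pow_zero, pow_zero, Matrix.one_mul, Matrix.mul_one]; rfl, det_one⟩
  | succ j ih =>
    obtain ⟨N, hN, hdet⟩ := ih
    refine ⟨P * N.map σ, ?_, ?_⟩
    · have hmap := congrArg (·.map σ) hN
      simp only [Matrix.map_mul, Matrix.map_pow, hQ, Matrix.map_map] at hmap
      rw [← RingHom.coe_comp, ← RingHom.mul_def, ← pow_succ'] at hmap
      rw [pow_succ', Matrix.mul_assoc, hmap, ← Matrix.mul_assoc, h, Matrix.mul_assoc]
    · rw [det_mul, ← RingHom.mapMatrix_apply, ← RingHom.map_det, hdet, map_prod,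
        Finset.prod_range_succ', mul_comm]
      simp only [pow_succ', RingHom.mul_def, RingHom.comp_apply, pow_zero, RingHom.one_def,
        RingHom.id_apply]

theorem exists_pow_finrank_eq_prod {s : L} {d : ℕ} (hσ : σ ^ d = 1) {Q : Matrix a a L}
    (hQ : Q.map σ = Q) (hQd : Q ^ d = s • (1 : Matrix a a L)) {W : Submodule L (a → L)}
    (hW : ∀ v ∈ W, Q *ᵥ (σ ∘ v) ∈ W) :
    ∃ p, s ^ Module.finrank L W = ∏ i ∈ Finset.range d, (σ ^ i) p := by
  obtain ⟨w, hw⟩ : ∃ w, Module.finrank L W = w := ⟨_, rfl⟩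
  obtain ⟨C, R, hRC, rfl⟩ := exists_matrix_mul_eq_one_and_range_eq W hw
  have hcol : ∀ j, ∃ y, C *ᵥ y = (Q * C.map σ).col j := fun j => by
    obtain ⟨y, hy⟩ := hW _ ⟨Pi.single j 1, rfl⟩
    refine ⟨y, hy.trans ?_⟩
    rw [mulVecLin_apply, mulVec_single_one]
    rfl
  choose y hy using hcol
  have hP : Q * C.map σ = C * (of y)ᵀ := ext_col fun j => (hy j).symm
  obtain ⟨N, hN, hdet⟩ := exists_pow_mul_map_eq_mul σ hQ hP d
  have hNs : s • (1 : Matrix (Fin w) (Fin w) L) = N := by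
    rw [hσ, hQd, Matrix.smul_mul, Matrix.one_mul, RingHom.coe_one, Matrix.map_id] at hN
    rw [← hRC, ← Matrix.mul_smul, hN, ← Matrix.mul_assoc, hRC, Matrix.one_mul]
  exact ⟨_, by rw [hw, ← hdet, ← hNs, det_smul, det_one, mul_one, Fintype.card_fin]⟩

end Semilinear

theorem span_pi_univ_eq_top {K L M ι : Type*} [Field K] [Field L] [Algebra K L] [AddCommGroup M]
    [Module K M] [Module L M] [Finite ι] {B : Submodule K M}
    (hB : Submodule.span L (B : Set M) = ⊤) :
    Submodule.span L (Submodule.pi Set.univ fun _ : ι => B : Set (ι → M)) = ⊤ := by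
  classical
  refine eq_top_iff.2 ?_
  rw [← Submodule.pi_top Set.univ, ← Submodule.iSup_map_single]
  refine iSup_le fun i => ?_
  rw [← hB, Submodule.map_span]
  refine Submodule.span_mono ?_
  rintro _ ⟨b, hb, rfl⟩
  refine Submodule.mem_pi.2 fun j _ => ?_
  rcases eq_or_ne j i with rfl | hj
  · simpa using hb
  · simp [hj]

section BlowUp

variable {ι a b F : Type*} [Fintype ι]

section CommRing

variable {α β : Type*} [CommRing F]

/-- The blow-up `∑ k, X k ⊗ T k` of a tuple of matrices `X` by matrices `T`: the value at `T` of the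
linear matrix in noncommuting variables with coefficients `X`. -/
def blowUp (X : ι → Matrix a b F) : (ι → Matrix α β F) →ₗ[F] Matrix (a × α) (b × β) F where
  toFun T := ∑ k, X k ⊗ₖ T k
  map_add' T T' := by simp only [Pi.add_apply, kronecker_add, Finset.sum_add_distrib]
  map_smul' c T := by simp only [Pi.smul_apply, kronecker_smul, Finset.smul_sum, RingHom.id_apply]

theorem blowUp_apply (X : ι → Matrix a b F) (T : ι → Matrix α β F) :
    blowUp X T = ∑ k, X k ⊗ₖ T k :=
  rfl

theorem blowUp_apply_apply (X : ι → Matrix a b F) (T : ι → Matrix α β F) (p : a × α) (q : b × β) :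
    blowUp X T p q = ∑ k, X k p.1 q.1 * T k p.2 q.2 := by
  simp only [blowUp_apply, Matrix.sum_apply, kroneckerMap_apply]

theorem submatrix_blowUp {α' β' : Type*} (X : ι → Matrix a b F) (T : ι → Matrix α β F) (f : α' → α)
    (g : β' → β) : (blowUp X T).submatrix (Prod.map id f) (Prod.map id g) =
      blowUp X fun k => (T k).submatrix f g := by
  ext p q
  simp only [submatrix_apply, blowUp_apply_apply, Prod.map_fst, Prod.map_snd, id_eq]

theorem map_blowUp {F' : Type*} [CommRing F'] (φ : F →+* F') (X : ι → Matrix a b F)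
    (T : ι → Matrix α β F) :
    (blowUp X T).map φ = blowUp (fun k => (X k).map φ) fun k => (T k).map φ := by
  ext p q
  simp only [map_apply, blowUp_apply_apply, map_sum, map_mul]

theorem one_kronecker_mul_blowUp {γ : Type*} [Fintype a] [DecidableEq a] [Fintype α]
    (P : Matrix γ α F) (X : ι → Matrix a b F) (T : ι → Matrix α β F) :
    ((1 : Matrix a a F) ⊗ₖ P) * blowUp X T = blowUp X fun k => P * T k := by
  simp only [blowUp_apply, Matrix.mul_sum, ← mul_kronecker_mul, Matrix.one_mul]

theorem one_kronecker_pow [Fintype a] [DecidableEq a] [Fintype α] [DecidableEq α]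
    (P : Matrix α α F) (j : ℕ) : ((1 : Matrix a a F) ⊗ₖ P) ^ j = 1 ⊗ₖ (P ^ j) := by
  induction j with
  | zero => simp only [pow_zero, one_kronecker_one]
  | succ j ih => rw [pow_succ, ih, ← mul_kronecker_mul, Matrix.one_mul, pow_succ]

theorem blowUp_mul_one_kronecker {γ : Type*} [Fintype b] [DecidableEq b] [Fintype β]
    (X : ι → Matrix a b F) (T : ι → Matrix α β F) (Q : Matrix β γ F) :
    blowUp X T * ((1 : Matrix b b F) ⊗ₖ Q) = blowUp X fun k => T k * Q := by
  simp only [blowUp_apply, Matrix.sum_mul, ← mul_kronecker_mul, Matrix.mul_one]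

end CommRing

section Regularity

variable {K : Type*} [Field K]

/-- The largest rank of a blow-up of `X` by `d × d` matrices. -/
noncomputable def blowUpRank [Fintype b] (X : ι → Matrix a b K) (d : ℕ) : ℕ :=
  ⨆ T : ι → Matrix (Fin d) (Fin d) K, (blowUp X T).rank

variable [Fintype b] (X : ι → Matrix a b K) (d : ℕ)

theorem bddAbove_range_rank_blowUp :
    BddAbove (Set.range fun T : ι → Matrix (Fin d) (Fin d) K => (blowUp X T).rank) :=
  ⟨_, Set.forall_mem_range.2 fun _ => rank_le_card_width _⟩

variable {d}

theorem rank_blowUp_submatrix {α α' β β' : Type*} [Fintype β] [Fintype β'] (T : ι → Matrix α β K)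
    (e : α' ≃ α) (f : β' ≃ β) :
    (blowUp X fun k => (T k).submatrix e f).rank = (blowUp X T).rank := by
  rw [← submatrix_blowUp, ← rank_submatrix (blowUp X T) (Equiv.prodCongrRight fun _ => e)
    (Equiv.prodCongrRight fun _ => f)]
  rfl

theorem rank_blowUp_le_blowUpRank {γ δ : Type*} [Fintype γ] [Fintype δ] (hγ : Fintype.card γ = d)
    (hδ : Fintype.card δ = d) (T : ι → Matrix γ δ K) : (blowUp X T).rank ≤ blowUpRank X d := by
  let e := (Fintype.equivFinOfCardEq hγ).symm
  let f := (Fintype.equivFinOfCardEq hδ).symm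
  rw [← rank_blowUp_submatrix X T e f]
  exact le_ciSup (bddAbove_range_rank_blowUp X d) _

theorem exists_rank_blowUp_eq_blowUpRank {γ : Type*} [Fintype γ] (hγ : Fintype.card γ = d) :
    ∃ T : ι → Matrix γ γ K, (blowUp X T).rank = blowUpRank X d := by
  obtain ⟨T, hT : (blowUp X T).rank = blowUpRank X d⟩ :=
    Nat.sSup_mem (Set.range_nonempty _) (bddAbove_range_rank_blowUp X d)
  let e := Fintype.equivFinOfCardEq hγ
  exact ⟨fun k => (T k).submatrix e e, (rank_blowUp_submatrix X T e e).trans hT⟩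

section FieldExtension

variable {L : Type*} [Field L] [Algebra K L]

theorem span_range_mapMatrix_linearMap_eq_top {α β : Type*} [Finite α] [Finite β] :
    Submodule.span L ((LinearMap.range (Algebra.linearMap K L).mapMatrix :
      Submodule K (Matrix α β L)) : Set (Matrix α β L)) = ⊤ := by
  classical
  cases nonempty_fintype α
  cases nonempty_fintype β
  refine eq_top_iff.2 fun T _ => ?_
  rw [matrix_eq_sum_single T]
  refine Submodule.sum_mem _ fun i _ => Submodule.sum_mem _ fun j _ => ?_
  rw [← mul_one (T i j), ← smul_eq_mul, ← smul_single]
  exact Submodule.smul_mem _ _ (Submodule.subset_span ⟨single i j 1, by simp⟩)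

theorem CyclicNormData.dvd_finrank_ker_blowUp [Finite a] {d : ℕ} [NeZero d]
    (D : CyclicNormData K d L) {X : ι → Matrix a b K} {T : ι → Matrix (ZMod d) (ZMod d) L}
    (hT : ∀ k, T k ∈ D.cyclicAlgebra) : d ∣ Module.finrank L
      (LinearMap.ker (blowUp (fun k => (X k).map (algebraMap K L)) T).mulVecLin) := by
  classical
  cases nonempty_fintype a
  set Y : ι → Matrix a b L := fun k => (X k).map (algebraMap K L)
  let q := cyclicShift d D.s
  have hq : ((1 : Matrix b b L) ⊗ₖ q).map D.σ = 1 ⊗ₖ q := by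
    ext p r
    have hpr : D.σ (q p.2 r.2) = q p.2 r.2 := congrFun₂ D.cyclicShift_map_σ p.2 r.2
    rw [map_apply, kroneckerMap_apply, map_mul, hpr, one_apply, apply_ite D.σ, map_one, map_zero]
  have hqd : ((1 : Matrix b b L) ⊗ₖ q) ^ d = D.s • 1 := by
    rw [one_kronecker_pow, cyclicShift_pow_self, kronecker_smul, one_kronecker_one]
  have hcomm : blowUp Y T * ((1 : Matrix b b L) ⊗ₖ q) =
      ((1 : Matrix a a L) ⊗ₖ q) * (blowUp Y T).map D.σ := by
    have hY : ∀ k, (Y k).map D.σ = Y k := fun k => ext fun _ _ => D.σ_algebraMap _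
    rw [blowUp_mul_one_kronecker, map_blowUp, one_kronecker_mul_blowUp, funext hY]
    exact congrArg _ (funext hT)
  obtain ⟨p, hp⟩ := exists_pow_finrank_eq_prod D.σ D.σ_pow hq hqd
    (W := LinearMap.ker (blowUp Y T).mulVecLin) fun v hv => by
      rw [LinearMap.mem_ker, mulVecLin_apply] at hv ⊢
      rw [mulVec_mulVec, hcomm, ← mulVec_mulVec, map_mulVec_comp, hv]
      simp [Function.comp_def, ← Pi.zero_def]
  exact D.dvd_of_pow_eq_norm _ p hp

variable [Infinite K] [Finite a]

theorem exists_forall_mem_rank_blowUp_le {α β : Type*} [Finite α] [Fintype β]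
    {B : Submodule K (Matrix α β L)} (hB : Submodule.span L (B : Set (Matrix α β L)) = ⊤)
    (Y : ι → Matrix a b L) (T : ι → Matrix α β L) :
    ∃ T', (∀ k, T' k ∈ B) ∧ (blowUp Y T).rank ≤ (blowUp Y T').rank := by
  have hT : T ∈ Submodule.span L (Submodule.pi Set.univ fun _ : ι => B : Set (ι → _)) := by
    rw [span_pi_univ_eq_top hB]
    exact Submodule.mem_top
  obtain ⟨T', hT', hle⟩ := exists_mem_rank_le_rank _ (blowUp Y) hT
  exact ⟨T', fun k => hT' k trivial, hle⟩

theorem rank_blowUp_map_algebraMap_le_blowUpRank (X : ι → Matrix a b K) {d : ℕ} {γ : Type*}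
    [Fintype γ] (hγ : Fintype.card γ = d) (T : ι → Matrix γ γ L) :
    (blowUp (fun k => (X k).map (algebraMap K L)) T).rank ≤ blowUpRank X d := by
  obtain ⟨T', hT', hle⟩ := exists_forall_mem_rank_blowUp_le (K := K)
    (span_range_mapMatrix_linearMap_eq_top (K := K)) (fun k => (X k).map (algebraMap K L)) T
  choose T₀ hT₀ using hT'
  obtain rfl : (fun k => (T₀ k).map (algebraMap K L)) = T' := funext hT₀
  rw [← map_blowUp, rank_map_algebraMap] at hle
  exact hle.trans (rank_blowUp_le_blowUpRank X hγ hγ _)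

end FieldExtension

theorem dvd_blowUpRank [Finite a] [Infinite K] (X : ι → Matrix a b K) (d : ℕ) :
    d ∣ blowUpRank X d := by
  rcases Nat.eq_zero_or_pos d with rfl | hd
  · obtain ⟨T, hT⟩ := exists_rank_blowUp_eq_blowUpRank X (Fintype.card_fin 0)
    rw [← hT, zero_dvd_iff, ← Nat.le_zero]
    simpa using rank_le_card_width (blowUp X T)
  have : NeZero d := ⟨hd.ne'⟩
  obtain ⟨L, _, _, ⟨D⟩⟩ := exists_cyclicNormData K d
  obtain ⟨T, hT⟩ := exists_rank_blowUp_eq_blowUpRank X (ZMod.card d)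
  obtain ⟨T', hT', hle⟩ := exists_forall_mem_rank_blowUp_le D.span_cyclicAlgebra_eq_top
    (fun k => (X k).map (algebraMap K L)) fun k => (T k).map (algebraMap K L)
  rw [← map_blowUp, rank_map_algebraMap, hT] at hle
  have hrank := hle.antisymm (rank_blowUp_map_algebraMap_le_blowUpRank X (ZMod.card d) T')
  have hadd := rank_add_finrank_ker_mulVecLin (blowUp (fun k => (X k).map (algebraMap K L)) T')
  rw [← hrank, Fintype.card_prod, ZMod.card] at hadd
  exact (Nat.dvd_add_left (D.dvd_finrank_ker_blowUp hT')).1 (hadd ▸ dvd_mul_left d _)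

end Regularity

end BlowUp

section KernelChain

variable {K V V' : Type*} [Field K] [AddCommGroup V] [Module K V] [AddCommGroup V'] [Module K V']

/-- The chains `y 0, …, y (s - 1)` with `A (y 0) = 0` and `A (y (j + 1)) = B j (y j)`. Their last
entries fill up the second Wong sequence of `A` and the `B j`. -/
def kernelChain (A : V →ₗ[K] V') (B : ℕ → V →ₗ[K] V') (s : ℕ) : Submodule K (Fin s → V) where
  carrier := {y | (∀ i : Fin s, (i : ℕ) = 0 → A (y i) = 0) ∧
    ∀ i j : Fin s, (i : ℕ) = j + 1 → A (y i) = B j (y j)}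
  add_mem' hy hz := ⟨fun i hi => by simp [hy.1 i hi, hz.1 i hi],
    fun i j hij => by simp [hy.2 i j hij, hz.2 i j hij]⟩
  zero_mem' := by simp
  smul_mem' c y hy := ⟨fun i hi => by simp [hy.1 i hi], fun i j hij => by simp [hy.2 i j hij]⟩

variable (A : V →ₗ[K] V') (B : ℕ → V →ₗ[K] V') (s : ℕ)

/-- The last entries of the chains of `A` whose steps are taken from `S`. -/
def chainEndpoints (S : Set (V →ₗ[K] V')) : Set V :=
  {v | ∃ (B : ℕ → V →ₗ[K] V') (s : ℕ), ∃ y ∈ kernelChain A B (s + 1),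
    (∀ j, B j ∈ S) ∧ y (Fin.last s) = v}

theorem ker_subset_chainEndpoints {S : Set (V →ₗ[K] V')} (hS : S.Nonempty) :
    (LinearMap.ker A : Set V) ⊆ chainEndpoints A S := by
  obtain ⟨C, hC⟩ := hS
  exact fun v hv => ⟨fun _ => C, 0, fun _ => v, ⟨fun _ _ => hv, fun i _ hij => by lia⟩,
    fun _ => hC, rfl⟩

/-- Deletion of the last entry of a chain. -/
def kernelChain.truncate : kernelChain A B (s + 1) →ₗ[K] kernelChain A B s :=
  (LinearMap.funLeft K V Fin.castSucc).restrict fun _ hy =>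
    ⟨fun i hi => hy.1 i.castSucc hi, fun i j hij => hy.2 i.castSucc j.castSucc hij⟩

theorem map_last_eq_zero_of_mem_ker_truncate {y : kernelChain A B (s + 1)}
    (hy : y ∈ LinearMap.ker (kernelChain.truncate A B s)) : A (y.1 (Fin.last s)) = 0 := by
  cases s with
  | zero => exact y.2.1 _ rfl
  | succ s =>
    have h : y.1 (Fin.last s).castSucc = 0 := congrFun (congrArg Subtype.val hy) (Fin.last s)
    rw [y.2.2 (Fin.last (s + 1)) (Fin.last s).castSucc rfl, h, map_zero]

variable [FiniteDimensional K V]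

theorem finrank_ker_truncate_le : Module.finrank K (LinearMap.ker (kernelChain.truncate A B s)) ≤
    Module.finrank K (LinearMap.ker A) := by
  let last : kernelChain A B (s + 1) →ₗ[K] V := LinearMap.proj (Fin.last s) ∘ₗ Submodule.subtype _
  have hlast : ∀ y ∈ LinearMap.ker (kernelChain.truncate A B s), last y ∈ LinearMap.ker A :=
    fun y hy => map_last_eq_zero_of_mem_ker_truncate A B s hy
  refine LinearMap.finrank_le_finrank_of_injective (f := last.restrict hlast)
    ((injective_iff_map_eq_zero _).2 ?_)
  rintro ⟨⟨y, hy⟩, hy'⟩ h0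
  refine Subtype.ext (Subtype.ext (funext fun i => ?_))
  induction i using Fin.lastCases with
  | last => exact congrArg Subtype.val h0
  | cast i => exact congrFun (congrArg Subtype.val hy') i

theorem finrank_kernelChain_le :
    Module.finrank K (kernelChain A B s) ≤ s * Module.finrank K (LinearMap.ker A) := by
  induction s with
  | zero => simp [Module.finrank_zero_of_subsingleton]
  | succ s ih =>
    have hadd := LinearMap.finrank_range_add_finrank_ker (kernelChain.truncate A B s)
    have hrange := Submodule.finrank_le (LinearMap.range (kernelChain.truncate A B s))
    have hker := finrank_ker_truncate_le A B s
    rw [add_mul, one_mul]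
    lia

variable {A B s}

theorem truncate_surjective (h : (s + 1) * Module.finrank K (LinearMap.ker A) ≤
    Module.finrank K (kernelChain A B (s + 1))) :
    Function.Surjective (kernelChain.truncate A B s) := by
  rw [← LinearMap.range_eq_top]
  refine Submodule.eq_top_of_finrank_eq ((Submodule.finrank_le _).antisymm ?_)
  have hadd := LinearMap.finrank_range_add_finrank_ker (kernelChain.truncate A B s)
  have hker := finrank_ker_truncate_le A B s
  have hle := finrank_kernelChain_le A B s
  rw [add_mul, one_mul] at h
  lia

variable {S : Set (V →ₗ[K] V')}

theorem exists_mem_chainEndpoints_map_eq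
    (h : ∀ B : ℕ → V →ₗ[K] V', (∀ j, B j ∈ S) → ∀ s,
      s * Module.finrank K (LinearMap.ker A) ≤ Module.finrank K (kernelChain A B s))
    {v : V} (hv : v ∈ chainEndpoints A S) {C : V →ₗ[K] V'} (hC : C ∈ S) :
    ∃ w ∈ chainEndpoints A S, A w = C v := by
  obtain ⟨B, s, y, hy, hB, rfl⟩ := hv
  have hB' : ∀ j, Function.update B s C j ∈ S := fun j => by
    rcases eq_or_ne j s with rfl | hj <;> simp [*]
  have hy' : y ∈ kernelChain A (Function.update B s C) (s + 1) := by
    refine ⟨hy.1, fun i j hij => ?_⟩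
    rw [Function.update_of_ne (by lia), hy.2 i j hij]
  obtain ⟨⟨z, hz⟩, hzy⟩ := truncate_surjective (h _ hB' _) ⟨y, hy'⟩
  have hlast : z (Fin.last s).castSucc = y (Fin.last s) :=
    congrFun (congrArg Subtype.val hzy) (Fin.last s)
  refine ⟨z (Fin.last (s + 1)), ⟨_, s + 1, z, hz, hB', rfl⟩, ?_⟩
  rw [hz.2 (Fin.last (s + 1)) (Fin.last s).castSucc rfl, hlast]
  simp

theorem exists_ker_le_and_map_le_map (hS : S.Nonempty)
    (h : ∀ B : ℕ → V →ₗ[K] V', (∀ j, B j ∈ S) → ∀ s,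
      s * Module.finrank K (LinearMap.ker A) ≤ Module.finrank K (kernelChain A B s)) :
    ∃ U : Submodule K V, LinearMap.ker A ≤ U ∧ ∀ C ∈ S, U.map C ≤ U.map A := by
  refine ⟨Submodule.span K (chainEndpoints A S),
    fun v hv => Submodule.subset_span (ker_subset_chainEndpoints A hS hv), fun C hC => ?_⟩
  rw [Submodule.map_span_le]
  intro v hv
  obtain ⟨w, hw, hwv⟩ := exists_mem_chainEndpoints_map_eq h hv hC
  exact ⟨w, Submodule.subset_span hw, hwv⟩

end KernelChain

section ShrunkSubspace

variable {K ι a b : Type*} [Field K]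

section Slices

variable {α : Type*}

/-- The vectors in `a × α → K ≃ (a → K) ⊗ (α → K)` all of whose slices lie in `P`: the subspace
`P ⊗ (α → K)`. -/
def sliceSubmodule (α : Type*) (P : Submodule K (a → K)) : Submodule K (a × α → K) :=
  ⨅ i : α, P.comap (LinearMap.funLeft K K fun p => (p, i))

theorem mem_sliceSubmodule {P : Submodule K (a → K)} {y : a × α → K} :
    y ∈ sliceSubmodule α P ↔ ∀ i, (fun p => y (p, i)) ∈ P :=
  Submodule.mem_iInf _

theorem finrank_sliceSubmodule [Finite a] [Fintype α] (P : Submodule K (a → K)) :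
    Module.finrank K (sliceSubmodule α P) = Fintype.card α * Module.finrank K P := by
  let e : (α → P) ≃ₗ[K] sliceSubmodule α P :=
    { toFun := fun z => ⟨fun q => (z q.2).1 q.1, mem_sliceSubmodule.2 fun i => (z i).2⟩
      map_add' := fun _ _ => rfl
      map_smul' := fun _ _ => rfl
      invFun := fun y i => ⟨fun p => y.1 (p, i), mem_sliceSubmodule.1 y.2 i⟩
      left_inv := fun _ => rfl
      right_inv := fun _ => rfl }
  rw [← e.finrank_eq, Module.finrank_pi_fintype, Finset.sum_const, Finset.card_univ, smul_eq_mul]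

/-- The vector `v ⊗ e i`, whose only nonzero slice is `v`, in position `i`. -/
def singleSlice [DecidableEq α] (i : α) : (a → K) →ₗ[K] a × α → K :=
  LinearMap.pi fun q => (Pi.single i 1 : α → K) q.2 • LinearMap.proj q.1

theorem singleSlice_apply [DecidableEq α] (i : α) (v : a → K) (q : a × α) :
    singleSlice i v q = (Pi.single i 1 : α → K) q.2 * v q.1 :=
  rfl

theorem sum_singleSlice [Fintype α] [DecidableEq α] (y : a × α → K) :
    ∑ i, singleSlice i (fun p => y (p, i)) = y := by
  ext ⟨p, i⟩
  simp [singleSlice_apply, Pi.single_apply]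

end Slices

variable [Fintype b]

/-- The span `∑ k, X k U` of the images of a subspace `U` under a tuple of matrices. The subspace
is shrunk by `X` if its image span has smaller dimension. -/
def imageSpan (X : ι → Matrix a b K) (U : Submodule K (b → K)) : Submodule K (a → K) :=
  ⨆ k, U.map (X k).mulVecLin

variable [Fintype ι] {X : ι → Matrix a b K}

theorem blowUp_mulVec_apply {β γ : Type*} [Fintype β] (T : ι → Matrix γ β K)
    (y : b × β → K) (p : a) (i : γ) : (blowUp X T *ᵥ y) (p, i) =
      ∑ q, ∑ j, (∑ k, X k p q * T k i j) * y (q, j) := by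
  simp only [mulVec, dotProduct, Fintype.sum_prod_type, blowUp_apply_apply]

theorem blowUp_single_mulVec {β γ : Type*} [Fintype β] [DecidableEq ι] [DecidableEq β]
    [DecidableEq γ] (k : ι) (i : γ) (j : β) (y : b × β → K) :
    blowUp X (Pi.single k (single i j 1)) *ᵥ y =
      singleSlice i (X k *ᵥ fun q => y (q, j)) := by
  rw [blowUp_apply, Finset.sum_eq_single k (fun l _ hl => by simp [hl]) (by simp)]
  ext ⟨p, i'⟩
  rcases eq_or_ne i i' with rfl | hi <;>
    simp [mulVec, dotProduct, singleSlice_apply, Fintype.sum_prod_type, single_apply, *]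

theorem sliceSubmodule_imageSpan_le_of_forall_map_le {β γ : Type*} [Fintype β] [Finite γ]
    {U : Submodule K (b × β → K)} {W : Submodule K (a × γ → K)}
    (h : ∀ T : ι → Matrix γ β K, U.map (blowUp X T).mulVecLin ≤ W) :
    sliceSubmodule γ (imageSpan X (⨆ j, U.map (LinearMap.funLeft K K fun q => (q, j)))) ≤ W := by
  classical
  cases nonempty_fintype γ
  intro z hz
  rw [← sum_singleSlice z]
  refine Submodule.sum_mem _ fun i _ => ?_
  suffices imageSpan X (⨆ j, U.map (LinearMap.funLeft K K fun q => (q, j))) ≤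
      W.comap (singleSlice i) from this (mem_sliceSubmodule.1 hz i)
  refine iSup_le fun k => Submodule.map_le_iff_le_comap.2 <| iSup_le fun j => ?_
  rintro _ ⟨y, hy, rfl⟩
  rw [Submodule.mem_comap, Submodule.mem_comap, mulVecLin_apply]
  exact blowUp_single_mulVec (X := X) k i j y ▸ h _ (Submodule.mem_map_of_mem hy)

/-- The block matrix with `T₀` on the diagonal and `-T j` in block position `(j + 1, j)`. -/
def blockBidiagonal {β : Type*} (T₀ : Matrix β β K) (T : ℕ → Matrix β β K) (s : ℕ) :
    Matrix (β × Fin s) (β × Fin s) K :=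
  of fun p q => if p.2 = q.2 then T₀ p.1 q.1
    else if (p.2 : ℕ) = q.2 + 1 then -T q.2 p.1 q.1 else 0

variable {β : Type*} [Fintype β]

theorem blowUp_blockBidiagonal_mulVec_apply (T₀ : ι → Matrix β β K) (T : ℕ → ι → Matrix β β K)
    (s : ℕ) (y : b × β × Fin s → K) (p : a) (c : β) (i : Fin s) :
    (blowUp X (fun k => blockBidiagonal (T₀ k) (fun j => T j k) s) *ᵥ y) (p, c, i) =
      (blowUp X T₀ *ᵥ fun q => y (q.1, q.2, i)) (p, c) - ∑ j : Fin s,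
        if (i : ℕ) = j + 1 then (blowUp X (T j) *ᵥ fun q => y (q.1, q.2, j)) (p, c) else 0 := by
  have hdiag : (blowUp X T₀ *ᵥ fun q => y (q.1, q.2, i)) (p, c) = ∑ j : Fin s,
      if i = j then (blowUp X T₀ *ᵥ fun q => y (q.1, q.2, j)) (p, c) else 0 := by simp
  rw [hdiag, ← Finset.sum_sub_distrib, blowUp_mulVec_apply]
  simp only [Fintype.sum_prod_type]
  simp_rw [Finset.sum_comm (t := (Finset.univ : Finset (Fin s)))]
  refine Finset.sum_congr rfl fun j _ => ?_
  rcases eq_or_ne i j with rfl | hij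
  · simp [blockBidiagonal, blowUp_mulVec_apply]
  · by_cases hij' : (i : ℕ) = j + 1 <;> simp [blockBidiagonal, blowUp_mulVec_apply, hij, hij']

theorem finrank_ker_blowUp_blockBidiagonal_le (T₀ : ι → Matrix β β K) (T : ℕ → ι → Matrix β β K)
    (s : ℕ) : Module.finrank K (LinearMap.ker
        (blowUp X fun k => blockBidiagonal (T₀ k) (fun j => T j k) s).mulVecLin) ≤
      Module.finrank K
        (kernelChain (blowUp X T₀).mulVecLin (fun j => (blowUp X (T j)).mulVecLin) s) := by
  let slices : (b × β × Fin s → K) →ₗ[K] Fin s → b × β → K :=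
    LinearMap.pi fun i => LinearMap.funLeft K K fun q => (q.1, q.2, i)
  have hslices : ∀ y ∈ LinearMap.ker
      (blowUp X fun k => blockBidiagonal (T₀ k) (fun j => T j k) s).mulVecLin,
      slices y ∈ kernelChain (blowUp X T₀).mulVecLin (fun j => (blowUp X (T j)).mulVecLin) s := by
    intro y hy
    have hrow : ∀ p c i, (blowUp X T₀ *ᵥ fun q => y (q.1, q.2, i)) (p, c) = ∑ j : Fin s,
        if (i : ℕ) = j + 1 then (blowUp X (T j) *ᵥ fun q => y (q.1, q.2, j)) (p, c) else 0 :=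
      fun p c i => by
        rw [← sub_eq_zero, ← blowUp_blockBidiagonal_mulVec_apply]
        exact congrFun hy (p, c, i)
    refine ⟨fun i hi => funext fun pc => ?_, fun i j hij => funext fun pc => ?_⟩
    · exact (hrow pc.1 pc.2 i).trans (Finset.sum_eq_zero fun j _ => if_neg (by lia))
    · refine (hrow pc.1 pc.2 i).trans ((Finset.sum_eq_single j ?_ (by simp)).trans (if_pos hij))
      exact fun l _ hl => if_neg fun hil => hl (Fin.ext (by lia))
  refine LinearMap.finrank_le_finrank_of_injective (f := slices.restrict hslices)
    fun y z hyz => Subtype.ext (funext fun q => ?_)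
  exact congrFun (congrFun (congrArg Subtype.val hyz) q.2.2) (q.1, q.2.1)

theorem blowUpRank_le (X : ι → Matrix a b K) (d : ℕ) : blowUpRank X d ≤ Fintype.card b * d := by
  obtain ⟨T, hT⟩ := exists_rank_blowUp_eq_blowUpRank X (Fintype.card_fin d)
  simpa [← hT] using rank_le_card_width (blowUp X T)

theorem mul_finrank_ker_le_finrank_kernelChain {d k : ℕ}
    (hmax : ∀ s, blowUpRank X (d * s) ≤ k * (d * s)) {T₀ : ι → Matrix (Fin d) (Fin d) K}
    (hT₀ : (blowUp X T₀).rank = k * d) (T : ℕ → ι → Matrix (Fin d) (Fin d) K) (s : ℕ) :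
    s * Module.finrank K (LinearMap.ker (blowUp X T₀).mulVecLin) ≤ Module.finrank K
      (kernelChain (blowUp X T₀).mulVecLin (fun j => (blowUp X (T j)).mulVecLin) s) := by
  refine le_trans ?_ (finrank_ker_blowUp_blockBidiagonal_le T₀ T s)
  set M := blowUp X fun k => blockBidiagonal (T₀ k) (fun j => T j k) s
  have hM : M.rank ≤ k * (d * s) :=
    (rank_blowUp_le_blowUpRank X (by simp) (by simp) _).trans (hmax s)
  have hker₀ := rank_add_finrank_ker_mulVecLin (blowUp X T₀)
  have hker := rank_add_finrank_ker_mulVecLin M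
  simp only [hT₀, Fintype.card_prod, Fintype.card_fin] at hker₀ hker
  zify at hM hker₀ hker ⊢
  linear_combination hM - hker + s * hker₀

theorem exists_finrank_imageSpan_lt [Finite a] {d k : ℕ} (hd : 0 < d) (hk : k < Fintype.card b)
    (hX : blowUpRank X d = k * d) (hmax : ∀ s, blowUpRank X (d * s) ≤ k * (d * s)) :
    ∃ U : Submodule K (b → K), Module.finrank K (imageSpan X U) < Module.finrank K U := by
  obtain ⟨T₀, hT₀⟩ := exists_rank_blowUp_eq_blowUpRank X (Fintype.card_fin d)
  rw [hX] at hT₀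
  set A := (blowUp X T₀).mulVecLin with hA
  obtain ⟨U, hker, hU⟩ := exists_ker_le_and_map_le_map (A := A)
    (S := Set.range fun T : ι → Matrix (Fin d) (Fin d) K => (blowUp X T).mulVecLin)
    (Set.range_nonempty _) fun B hB s => by
      choose T hT using hB
      obtain rfl := funext hT
      exact mul_finrank_ker_le_finrank_kernelChain hmax hT₀ T s
  have hkerpos : 0 < Module.finrank K (LinearMap.ker A) := by
    have hadd := rank_add_finrank_ker_mulVecLin (blowUp X T₀)
    rw [hT₀, Fintype.card_prod, Fintype.card_fin, ← hA] at hadd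
    have := Nat.mul_lt_mul_of_pos_right hk hd
    lia
  have hmap : Module.finrank K (U.map A) < Module.finrank K U := by
    have hadd := LinearMap.finrank_range_add_finrank_ker (A.domRestrict U)
    rw [LinearMap.range_domRestrict, LinearMap.ker_domRestrict,
      (Submodule.comapSubtypeEquivOfLe hker).finrank_eq] at hadd
    lia
  let U₀ : Submodule K (b → K) := ⨆ j, U.map (LinearMap.funLeft K K fun q => (q, j))
  refine ⟨U₀, Nat.lt_of_mul_lt_mul_left (a := Fintype.card (Fin d)) ?_⟩
  rw [← finrank_sliceSubmodule, ← finrank_sliceSubmodule]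
  calc Module.finrank K (sliceSubmodule (Fin d) (imageSpan X U₀))
      ≤ Module.finrank K (U.map A) := Submodule.finrank_mono <|
        sliceSubmodule_imageSpan_le_of_forall_map_le fun T => hU _ ⟨T, rfl⟩
    _ < Module.finrank K U := hmap
    _ ≤ Module.finrank K (sliceSubmodule (Fin d) U₀) := Submodule.finrank_mono fun y hy =>
        mem_sliceSubmodule.2 fun j => Submodule.mem_iSup_of_mem j (Submodule.mem_map_of_mem hy)

variable (X) in
theorem exists_blowUpRank_eq_mul_and_forall_le [Finite a] [Infinite K] (N : ℕ) :
    ∃ k, ∃ d > N, blowUpRank X d = k * d ∧ ∀ e > N, blowUpRank X e ≤ k * e := by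
  choose k hk using fun d => dvd_blowUpRank X d
  have hbdd : BddAbove (k '' Set.Ioi N) := by
    refine ⟨Fintype.card b, Set.forall_mem_image.2 fun d hd => ?_⟩
    refine Nat.le_of_mul_le_mul_left ?_ (Nat.zero_lt_of_lt hd)
    rw [← hk, mul_comm]
    exact blowUpRank_le X d
  obtain ⟨d, hd, hkd⟩ := Nat.sSup_mem (Set.nonempty_Ioi.image k) hbdd
  refine ⟨k d, d, hd, by rw [hk, mul_comm], fun e he => ?_⟩
  rw [hk, mul_comm, hkd]
  exact Nat.mul_le_mul_right _ (le_csSup hbdd ⟨e, he, rfl⟩)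

theorem exists_blowUpRank_eq_card_mul [Finite a] [Infinite K]
    (hX : ∀ U : Submodule K (b → K), Module.finrank K U ≤ Module.finrank K (imageSpan X U))
    (N : ℕ) : ∃ d > N, blowUpRank X d = Fintype.card b * d := by
  obtain ⟨k, d, hd, hk, hmax⟩ := exists_blowUpRank_eq_mul_and_forall_le X N
  refine ⟨d, hd, ?_⟩
  rcases Nat.lt_or_ge k (Fintype.card b) with hlt | hge
  · have hmul : ∀ s, blowUpRank X (d * s) ≤ k * (d * s) := fun s => by
      rcases Nat.eq_zero_or_pos s with rfl | hs
      · simpa using blowUpRank_le X 0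
      · exact hmax _ (hd.trans_le (Nat.le_mul_of_pos_right d hs))
    obtain ⟨U, hU⟩ := exists_finrank_imageSpan_lt (Nat.zero_lt_of_lt hd) hlt hk hmul
    exact absurd (hX U) hU.not_ge
  · exact (blowUpRank_le X d).antisymm (hk ▸ Nat.mul_le_mul_right d hge)

end ShrunkSubspace

theorem iInf_fin_succ {α : Type*} [CompleteLattice α] {n : ℕ} (f : Fin (n + 1) → α) :
    ⨅ i, f i = f 0 ⊓ ⨅ i : Fin n, f i.succ := by
  rw [← (finSuccEquiv n).symm.iInf_comp, iInf_option]
  rfl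

section Counting

variable {K V ι : Type*} [Field K] [AddCommGroup V] [Module K V] [FiniteDimensional K V]

theorem exists_fin_inf_iInf_eq_bot [Nonempty ι] {P : ι → Submodule K V} (hP : ⨅ i, P i = ⊥)
    {e : ℕ} {U : Submodule K V} (hU : Module.finrank K U ≤ e) :
    ∃ s : Fin e → ι, U ⊓ ⨅ i, P (s i) = ⊥ := by
  induction e generalizing U with
  | zero => exact ⟨Fin.elim0, by rw [Submodule.finrank_eq_zero.1 (Nat.le_zero.1 hU), bot_inf_eq]⟩
  | succ e ih =>
    obtain ⟨i, hi⟩ : ∃ i, Module.finrank K (U ⊓ P i : Submodule K V) ≤ e := by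
      rcases eq_or_ne U ⊥ with rfl | hne
      · exact ⟨Classical.arbitrary ι, by rw [bot_inf_eq, finrank_bot]; exact Nat.zero_le e⟩
      · obtain ⟨i, hi⟩ : ∃ i, ¬ U ≤ P i := by
          by_contra! hle
          exact hne (le_bot_iff.1 (hP ▸ le_iInf hle))
        have := Submodule.finrank_lt_finrank_of_lt (inf_lt_left.2 hi)
        exact ⟨i, by lia⟩
    obtain ⟨s, hs⟩ := ih hi
    refine ⟨Fin.cons i s, ?_⟩
    rwa [iInf_fin_succ, ← inf_assoc]

theorem finrank_add_le_finrank_sup {G H S : Submodule K V} {c : ℕ} (hGH : G ≤ H) (hHS : H ⊔ S = ⊤)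
    (hH : Module.finrank K H + c ≤ Module.finrank K V) :
    Module.finrank K G + c ≤ Module.finrank K (G ⊔ S : Submodule K V) := by
  have hG := Submodule.finrank_sup_add_finrank_inf_eq G S
  have hH' := Submodule.finrank_sup_add_finrank_inf_eq H S
  have hinf := Submodule.finrank_mono (inf_le_inf_right S hGH)
  rw [hHS, finrank_top] at hH'
  lia

theorem exists_finrank_lt_finrank_iSup_ne_add [Fintype ι] {S : ι → Submodule K V}
    (hS : ⨆ i, S i = ⊤) (o : ι) {c : ℕ}
    (ho : Module.finrank K V < Module.finrank K (S o) + (Fintype.card ι - 1) * c) :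
    ∃ j, Module.finrank K V <
      Module.finrank K (⨆ i : {i // i ≠ j}, S i.1 : Submodule K V) + c := by
  classical
  by_contra! hle
  have hle_iSup : ∀ s : Finset ι, o ∉ s → Module.finrank K (S o) + s.card * c ≤
      Module.finrank K (S o ⊔ s.sup S : Submodule K V) := by
    intro s hos
    induction s using Finset.induction_on with
    | empty => rw [Finset.card_empty, Finset.sup_empty, sup_bot_eq, zero_mul, add_zero]
    | insert j s hj ih =>
      rw [Finset.mem_insert, not_or] at hos
      have hother : S o ⊔ s.sup S ≤ ⨆ i : {i // i ≠ j}, S i.1 :=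
        sup_le (le_iSup (fun i : {i // i ≠ j} => S i.1) ⟨o, hos.1⟩) <| Finset.sup_le fun i hi =>
          le_iSup (fun i : {i // i ≠ j} => S i.1) ⟨i, fun hij => hj (hij ▸ hi)⟩
      have htop : (⨆ i : {i // i ≠ j}, S i.1) ⊔ S j = ⊤ := by
        refine eq_top_iff.2 (hS ▸ iSup_le fun i => ?_)
        rcases eq_or_ne i j with rfl | hij
        · exact le_sup_right
        · exact (le_iSup (fun i : {i // i ≠ j} => S i.1) ⟨i, hij⟩).trans le_sup_left
      have := finrank_add_le_finrank_sup hother htop (hle j)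
      rw [Finset.sup_insert, sup_left_comm, sup_comm (S j), Finset.card_insert_of_notMem hj,
        add_mul, one_mul]
      linarith [ih hos.2]
  have hall := (hle_iSup (Finset.univ.erase o) (by simp)).trans (Submodule.finrank_le _)
  rw [Finset.card_erase_of_mem (Finset.mem_univ _), Finset.card_univ] at hall
  lia

end Counting

section RankOne

variable {K a b : Type*} [Field K] [Fintype b]

theorem range_mulVecLin_eq_span_singleton_of_rank_le_one {M : Matrix a b K} (hM : M.rank ≤ 1)
    {u : b → K} (hu : M *ᵥ u ≠ 0) : LinearMap.range M.mulVecLin = K ∙ (M *ᵥ u) :=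
  have hle : K ∙ (M *ᵥ u) ≤ LinearMap.range M.mulVecLin :=
    (Submodule.span_singleton_le_iff_mem _ _).2 (LinearMap.mem_range_self M.mulVecLin u)
  (Submodule.eq_of_le_of_finrank_le hle (by rwa [finrank_span_singleton hu])).symm

theorem range_mulVecLin_le_span_singleton_of_rank_add_le_one {M P : Matrix a b K}
    (hP : P.rank ≤ 1) (hMP : (M + P).rank ≤ 1) {u w : b → K} (hu : M *ᵥ u = 0)
    (hPu : P *ᵥ u ≠ 0) (hw : M *ᵥ w ≠ 0) : LinearMap.range P.mulVecLin ≤ K ∙ (M *ᵥ w) := by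
  have hrP := range_mulVecLin_eq_span_singleton_of_rank_le_one hP hPu
  have hadd : (M + P) *ᵥ u = P *ᵥ u := by rw [add_mulVec, hu, zero_add]
  have hrMP := range_mulVecLin_eq_span_singleton_of_rank_le_one hMP (hadd ▸ hPu)
  rw [hadd, ← hrP] at hrMP
  have hMw : M *ᵥ w ∈ LinearMap.range P.mulVecLin := by
    have hmem : (M + P) *ᵥ w ∈ LinearMap.range P.mulVecLin := hrMP ▸ ⟨w, rfl⟩
    rw [add_mulVec] at hmem
    exact (Submodule.add_mem_iff_left _ (LinearMap.mem_range_self _ w)).1 hmem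
  refine (Submodule.eq_of_le_of_finrank_le
    ((Submodule.span_singleton_le_iff_mem _ _).2 hMw) ?_).ge
  rwa [finrank_span_singleton hw]

theorem rank_submatrix_of_rank_eq_card {a' : Type*} [Fintype a'] [Fintype a] {M : Matrix a b K}
    (hM : M.rank = Fintype.card a) {f : a' → a} (hf : Function.Injective f) :
    (M.submatrix f id).rank = Fintype.card a' :=
  have hrows : LinearIndependent K M.row :=
    linearIndependent_iff_card_eq_finrank_span.2 (hM.symm.trans M.rank_eq_finrank_span_row)
  (hrows.comp f hf).rank_matrix

end RankOne

section Descent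

variable {K ι a b : Type*} [Field K] [Fintype b]

section Jump

variable [Fintype ι]

theorem range_blowUp_eq_iSup_range_col {γ δ : Type*} [Fintype δ] (X : ι → Matrix a b K)
    (T : ι → Matrix γ δ K) : LinearMap.range (blowUp X T).mulVecLin =
      ⨆ j, LinearMap.range (blowUp X fun k => (T k).submatrix id fun _ : Unit => j).mulVecLin := by
  simp_rw [range_mulVecLin, ← Submodule.span_iUnion]
  congr 1
  ext y
  simp only [← submatrix_blowUp, Set.mem_range, Set.mem_iUnion, Prod.exists]
  exact ⟨fun ⟨q, j, h⟩ => ⟨j, q, (), h⟩, fun ⟨j, q, _, h⟩ => ⟨q, j, h⟩⟩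

theorem blowUpRank_eq_of_lt_rank_add [Finite a] [Infinite K] (X : ι → Matrix a b K) {d : ℕ}
    {γ δ : Type*} [Fintype γ] [Fintype δ] (hγ : Fintype.card γ = d) (hδ : Fintype.card δ = d)
    (T : ι → Matrix γ δ K) (hT : Fintype.card b * d < (blowUp X T).rank + d) :
    blowUpRank X d = Fintype.card b * d := by
  obtain ⟨k, hk⟩ := dvd_blowUpRank X d
  have hle := rank_blowUp_le_blowUpRank X hγ hδ T
  have hlt : d * Fintype.card b < d * (k + 1) := by
    rw [mul_add, ← hk]
    lia
  refine (blowUpRank_le X d).antisymm ?_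
  rw [hk, mul_comm]
  exact Nat.mul_le_mul_left _ (Nat.le_of_lt_succ (Nat.lt_of_mul_lt_mul_left hlt))

theorem exists_rank_blowUp_col_eq_card {γ : Type*} {X : ι → Matrix a b K}
    {N : γ → Matrix a b K} (hN : ∀ i, N i ∈ Submodule.span K (Set.range X))
    (hker : ⨅ i, LinearMap.ker (N i).mulVecLin = ⊥) :
    ∃ T : ι → Matrix γ Unit K, (blowUp X T).rank = Fintype.card b := by
  choose c hc using fun i => (Submodule.mem_span_range_iff_exists_fun K).1 (hN i)
  refine ⟨fun k => of fun i _ => c i k, ?_⟩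
  have hadd := rank_add_finrank_ker_mulVecLin (blowUp X fun k => of fun i (_ : Unit) => c i k)
  suffices LinearMap.ker (blowUp X fun k => of fun i (_ : Unit) => c i k).mulVecLin = ⊥ by
    rwa [this, finrank_bot, add_zero, Fintype.card_prod, Fintype.card_unit, mul_one] at hadd
  refine eq_bot_iff.2 fun y hy => ?_
  suffices (fun q => y (q, ())) ∈ ⨅ i, LinearMap.ker (N i).mulVecLin by
    rw [hker, Submodule.mem_bot] at this
    exact funext fun q => congrFun this q.1
  refine Submodule.mem_iInf _ |>.2 fun i => funext fun p => ?_
  refine Eq.trans ?_ (congrFun hy (p, i))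
  rw [mulVecLin_apply, mulVecLin_apply, blowUp_mulVec_apply, ← hc]
  simp [mulVec, dotProduct, Matrix.sum_apply, mul_comm]

theorem exists_rank_blowUp_castSucc_eq (X : ι → Matrix b b K) {d : ℕ}
    (h : blowUpRank X (d + 1) = Fintype.card b * (d + 1)) :
    ∃ T : ι → Matrix (Fin d) (Fin (d + 1)) K, (blowUp X T).rank = Fintype.card b * d := by
  obtain ⟨T, hT⟩ := exists_rank_blowUp_eq_blowUpRank X (Fintype.card_fin (d + 1))
  refine ⟨fun k => (T k).submatrix Fin.castSucc id, ?_⟩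
  rw [← submatrix_blowUp, Prod.map_id, rank_submatrix_of_rank_eq_card (by simp [hT, h])
    (Function.injective_id.prodMap (Fin.castSucc_injective d)), Fintype.card_prod,
    Fintype.card_fin]

end Jump

variable {X : ι → Matrix a b K}
  (hX : ∀ U : Submodule K (b → K), Module.finrank K U ≤ Module.finrank K (imageSpan X U))
include hX

theorem iInf_ker_mulVecLin_eq_bot : ⨅ k, LinearMap.ker (X k).mulVecLin = ⊥ := by
  have himage : imageSpan X (⨅ k, LinearMap.ker (X k).mulVecLin) = ⊥ :=
    iSup_eq_bot.2 fun k => LinearMap.le_ker_iff_map.1 (iInf_le _ k)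
  have hle := hX (⨅ k, LinearMap.ker (X k).mulVecLin)
  rwa [himage, finrank_bot, Nat.le_zero, Submodule.finrank_eq_zero] at hle

theorem exists_mulVec_ne_zero {u : b → K} (hu : u ≠ 0) : ∃ k, X k *ᵥ u ≠ 0 := by
  by_contra! hzero
  have hmem : u ∈ ⨅ k, LinearMap.ker (X k).mulVecLin := (Submodule.mem_iInf _).2 hzero
  rw [iInf_ker_mulVecLin_eq_bot hX] at hmem
  exact hu hmem

theorem exists_mem_span_two_le_rank (hb : 2 ≤ Fintype.card b) :
    ∃ N ∈ Submodule.span K (Set.range X), 2 ≤ N.rank := by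
  by_contra! hrank
  replace hrank := fun N hN => Nat.le_of_lt_succ (hrank N hN)
  have hXmem : ∀ k, X k ∈ Submodule.span K (Set.range X) := fun k =>
    Submodule.subset_span ⟨k, rfl⟩
  have : Nonempty b := Fintype.card_pos_iff.1 (by lia)
  obtain ⟨w, hw⟩ := exists_ne (0 : b → K)
  obtain ⟨l, hl⟩ := exists_mulVec_ne_zero hX hw
  obtain ⟨u, hu, hu0⟩ : ∃ u, X l *ᵥ u = 0 ∧ u ≠ 0 := by
    have hker : LinearMap.ker (X l).mulVecLin ≠ ⊥ := fun hker => by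
      have hadd := rank_add_finrank_ker_mulVecLin (X l)
      rw [hker, finrank_bot] at hadd
      have := hrank _ (hXmem l)
      lia
    exact (Submodule.ne_bot_iff _).1 hker
  obtain ⟨c, hc⟩ := exists_mulVec_ne_zero hX hu0
  have hrange : ∀ N ∈ Submodule.span K (Set.range X), N *ᵥ u ≠ 0 →
      LinearMap.range N.mulVecLin ≤ K ∙ (X l *ᵥ w) := fun N hN hNu =>
    range_mulVecLin_le_span_singleton_of_rank_add_le_one (hrank N hN)
      (hrank _ (add_mem (hXmem l) hN)) hu hNu hl
  have himage : imageSpan X ⊤ ≤ K ∙ (X l *ᵥ w) := iSup_le fun k => by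
    rw [Submodule.map_top]
    by_cases hk : X k *ᵥ u = 0
    · have hkc := hrange _ (add_mem (hXmem k) (hXmem c)) (by rwa [add_mulVec, hk, zero_add])
      rintro _ ⟨y, rfl⟩
      have hy := sub_mem (hkc ⟨y, rfl⟩) (hrange _ (hXmem c) hc ⟨y, rfl⟩)
      simpa [add_mulVec] using hy
    · exact hrange _ (hXmem k) hk
  have hle := (hX ⊤).trans (Submodule.finrank_mono himage)
  rw [finrank_span_singleton hl, finrank_top, Module.finrank_fintype_fun_eq_card] at hle
  lia

theorem exists_rank_blowUp_fin_unit_eq_card [Fintype ι] (hb : 2 ≤ Fintype.card b) {d : ℕ}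
    (hd : Fintype.card b ≤ d + 1) :
    ∃ T : ι → Matrix (Fin d) Unit K, (blowUp X T).rank = Fintype.card b := by
  obtain ⟨N, hN, hrank⟩ := exists_mem_span_two_le_rank hX hb
  have : Nonempty ι := by
    by_contra hι
    rw [not_nonempty_iff] at hι
    rw [Set.range_eq_empty, Submodule.span_empty, Submodule.mem_bot] at hN
    rw [hN, rank_zero] at hrank
    lia
  obtain ⟨e, rfl⟩ : ∃ e, d = e + 1 := Nat.exists_eq_add_of_le' (by lia)
  have hker : Module.finrank K (LinearMap.ker N.mulVecLin) ≤ e := by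
    have := rank_add_finrank_ker_mulVecLin N
    lia
  obtain ⟨s, hs⟩ := exists_fin_inf_iInf_eq_bot (iInf_ker_mulVecLin_eq_bot hX) hker
  refine exists_rank_blowUp_col_eq_card (N := Fin.cons N fun i => X (s i)) (fun i => ?_) ?_
  · cases i using Fin.cases with
    | zero => exact hN
    | succ i => exact Submodule.subset_span ⟨s i, rfl⟩
  · rwa [iInf_fin_succ]

end Descent

section SquareDescent

variable {K ι b : Type*} [Field K] [Infinite K] [Fintype ι] [Fintype b] {X : ι → Matrix b b K}
  (hX : ∀ U : Submodule K (b → K), Module.finrank K U ≤ Module.finrank K (imageSpan X U))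
  (hb : 2 ≤ Fintype.card b)

include hX hb

theorem exists_rank_blowUp_eq_and_le_rank_blowUp_col {d : ℕ} (hd : Fintype.card b ≤ d + 1)
    (h : blowUpRank X (d + 1) = Fintype.card b * (d + 1)) :
    ∃ T : ι → Matrix (Fin d) (Fin (d + 1)) K, Fintype.card b * d ≤ (blowUp X T).rank ∧
      Fintype.card b ≤ (blowUp X fun k => (T k).submatrix id fun _ : Unit => 0).rank := by
  obtain ⟨T, hT⟩ := exists_rank_blowUp_castSucc_eq X h
  obtain ⟨C, hC⟩ := exists_rank_blowUp_fin_unit_eq_card hX hb hd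
  let col : (ι → Matrix (Fin d) (Fin (d + 1)) K) →ₗ[K] ι → Matrix (Fin d) Unit K :=
    { toFun := fun T k => (T k).submatrix id fun _ => 0
      map_add' := fun _ _ => rfl
      map_smul' := fun _ _ => rfl }
  obtain ⟨Z, hTZ, hCZ⟩ := exists_rank_le_rank_and_rank_le_rank (blowUp X) (blowUp X ∘ₗ col) T
    fun k => (C k).submatrix id fun _ => ()
  exact ⟨Z, hT ▸ hTZ, hC ▸ hCZ⟩

-- Deleting a block row from an invertible blow-up leaves `d + 1` spanning block columns. If one of
-- them has rank at least `card b`, counting dimensions shows that some block column can be deleted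
-- at the cost of less than `d` in rank, and divisibility of the rank by `d` absorbs this loss.
theorem blowUpRank_eq_of_blowUpRank_succ_eq {d : ℕ} (hd : Fintype.card b ≤ d + 1)
    (h : blowUpRank X (d + 1) = Fintype.card b * (d + 1)) :
    blowUpRank X d = Fintype.card b * d := by
  obtain ⟨T, hT, hcol⟩ := exists_rank_blowUp_eq_and_le_rank_blowUp_col hX hb hd h
  have hV : Module.finrank K (b × Fin d → K) = Fintype.card b * d := by simp
  have htop : LinearMap.range (blowUp X T).mulVecLin = ⊤ :=
    Submodule.eq_top_of_finrank_eq ((Submodule.finrank_le _).antisymm (hV ▸ hT))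
  rw [range_blowUp_eq_iSup_range_col] at htop
  obtain ⟨j, hj⟩ := exists_finrank_lt_finrank_iSup_ne_add (c := d) htop 0 (by
    have hlt : Fintype.card b * d < Fintype.card b + d * d := by nlinarith
    rw [hV, Fintype.card_fin, Nat.add_sub_cancel]
    exact hlt.trans_le (Nat.add_le_add_right hcol _))
  refine blowUpRank_eq_of_lt_rank_add X (Fintype.card_fin d) (δ := {i : Fin (d + 1) // i ≠ j})
    (by simp) (fun k => (T k).submatrix id Subtype.val) ?_
  rw [Matrix.rank, range_blowUp_eq_iSup_range_col]
  rwa [hV] at hj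

theorem blowUpRank_eq_card_mul {d : ℕ} (hd : Fintype.card b ≤ d + 1) :
    blowUpRank X d = Fintype.card b * d := by
  obtain ⟨e, he, hfull⟩ := exists_blowUpRank_eq_card_mul hX d
  refine Nat.decreasingInduction' (P := fun k => blowUpRank X k = Fintype.card b * k)
    (fun k _ hk => ?_) he.le hfull
  exact blowUpRank_eq_of_blowUpRank_succ_eq hX hb (by lia)

theorem exists_det_blowUp_ne_zero [DecidableEq b] {d : ℕ} (hd : Fintype.card b ≤ d + 1) :
    ∃ T : ι → Matrix (Fin d) (Fin d) K, (blowUp X T).det ≠ 0 := by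
  obtain ⟨T, hT⟩ := exists_rank_blowUp_eq_blowUpRank X (Fintype.card_fin d)
  rw [blowUpRank_eq_card_mul hX hb hd] at hT
  refine ⟨T, ((isUnit_iff_isUnit_det _).1 (linearIndependent_rows_iff_isUnit.1 ?_)).ne_zero⟩
  rw [linearIndependent_iff_card_eq_finrank_span, Set.finrank, ← rank_eq_finrank_span_row, hT,
    Fintype.card_prod, Fintype.card_fin]

end SquareDescent

section Vanishing

variable {K : Type*} [Field K]

theorem aeval_smul_of_isHomogeneous {σ : Type*} {q : ℕ} {p : MvPolynomial σ K}
    (hp : p.IsHomogeneous q) (s : K) (c : σ → K) : aeval (s • c) p = s ^ q * aeval c p := by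
  rw [aeval_def, aeval_def, eval₂_eq, eval₂_eq, Finset.mul_sum]
  refine Finset.sum_congr rfl fun d hd => ?_
  have hdeg : ∑ i ∈ d.support, d i = q := by
    rw [← hp (mem_support_iff.1 hd), Pi.one_def, ← Finsupp.degree_eq_weight_one]
    rfl
  simp only [Pi.smul_apply, smul_eq_mul, mul_pow, Finset.prod_mul_distrib,
    Finset.prod_pow_eq_pow_sum, hdeg]
  ring

theorem eq_zero_of_forall_pow_mul_eval_eq [Infinite K] {P : Polynomial K} {c : K} {k : ℕ}
    (hk : k ≠ 0) (hP : ∀ s ≠ 0, s ^ k * P.eval s = c) : c = 0 := by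
  have hroots : ({0}ᶜ : Set K) ⊆ {s | (Polynomial.X ^ k * P - Polynomial.C c).IsRoot s} := by
    intro s hs
    simp [Polynomial.IsRoot, hP s hs]
  have hzero := Polynomial.eq_zero_of_infinite_isRoot _
    ((Set.finite_singleton 0).infinite_compl.mono hroots)
  simpa [hk] using congrArg (Polynomial.eval 0) hzero

theorem det_one_add_smul_mul_of_mul_eq_one {a b : Type*} [Fintype a] [DecidableEq a] [Fintype b]
    [DecidableEq b] {C : Matrix a b K} {R : Matrix b a K} (h : R * C = 1) (t : K) :
    (1 + (t - 1) • (C * R)).det = t ^ Fintype.card b := by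
  rw [← Matrix.smul_mul, det_one_add_mul_comm, Matrix.mul_smul, h, ← one_smul K (1 : Matrix b b K),
    smul_smul, ← add_smul, mul_one, add_sub_cancel, det_smul, det_one, mul_one]

theorem one_add_smul_mul_mul_one_add_inv_smul {A : Type*} [Ring A] [Algebra K A] {p q x : A}
    (h : p * x * q = x * q) {t : K} (ht : t ≠ 0) :
    (1 + (t - 1) • p) * x * (1 + (t⁻¹ - 1) • q) = x + (t - 1) • (p * x - x * q) := by
  have hcoeff : (t⁻¹ - 1) + (t - 1) * (t⁻¹ - 1) = -(t - 1) := by field_simp; ring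
  simp only [add_mul, mul_add, one_mul, mul_one, smul_mul_assoc, mul_smul_comm, smul_smul,
    smul_add, h]
  linear_combination (norm := module) hcoeff • (x * q)

end Vanishing

section SemiInvariants

variable {K : Type} [Field K] {n m : ℕ} {g : MvPolynomial (Fin m × Fin n × Fin n) K}

theorem mem_matrixSemiInvariants_iff :
    g ∈ matrixSemiInvariants K n m ↔ ∀ (A B : SpecialLinearGroup (Fin n) K)
      (v : Fin m → Matrix (Fin n) (Fin n) K),
      aeval (matCoords fun i => A.val * v i * B.val) g = aeval (matCoords v) g := by
  simp only [matrixSemiInvariants, Algebra.mem_iInf, AlgHom.mem_equalizer]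
  exact ⟨fun h A B v => by simpa using h A B⁻¹ v, fun h A B => h A B⁻¹⟩

theorem exists_eq_smul_of_det_eq_pow {A : Matrix (Fin n) (Fin n) K} {a : K} (ha : a ≠ 0)
    (hA : A.det = a ^ n) : ∃ A' : SpecialLinearGroup (Fin n) K, A = a • A'.val :=
  ⟨⟨a⁻¹ • A, by
    rw [det_smul, Fintype.card_fin, hA, ← mul_pow, inv_mul_cancel₀ ha, one_pow]⟩,
    (smul_inv_smul₀ ha A).symm⟩

theorem aeval_matCoords_mul_mul_of_det_eq_pow (hg : g ∈ matrixSemiInvariants K n m) {D : ℕ}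
    (hD : g.IsHomogeneous D) {A B : Matrix (Fin n) (Fin n) K} {a b : K} (ha : a ≠ 0) (hb : b ≠ 0)
    (hA : A.det = a ^ n) (hB : B.det = b ^ n) (v : Fin m → Matrix (Fin n) (Fin n) K) :
    aeval (matCoords fun i => A * v i * B) g = (a * b) ^ D * aeval (matCoords v) g := by
  obtain ⟨A', rfl⟩ := exists_eq_smul_of_det_eq_pow ha hA
  obtain ⟨B', rfl⟩ := exists_eq_smul_of_det_eq_pow hb hB
  rw [← mem_matrixSemiInvariants_iff.1 hg A' B' v, ← aeval_smul_of_isHomogeneous hD]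
  congr 2
  funext p
  simp [matCoords, mul_assoc, mul_left_comm]

theorem exists_eval_eq_aeval_matCoords_add_smul (g : MvPolynomial (Fin m × Fin n × Fin n) K)
    (v Y : Fin m → Matrix (Fin n) (Fin n) K) (c : Polynomial K) :
    ∃ P : Polynomial K, ∀ s, P.eval s = aeval (matCoords fun k => v k + c.eval s • Y k) g := by
  refine ⟨aeval (fun p => Polynomial.C (matCoords v p) + c * Polynomial.C (matCoords Y p)) g,
    fun s => ?_⟩
  rw [← Polynomial.coe_aeval_eq_eval, comp_aeval_apply]
  congr 2
  funext p
  simp [matCoords]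

-- The parameter is `t = s ^ n`, so that the determinants of the acting matrices are `n`-th powers
-- and the matrices can be normalized into `SL_n`.
theorem aeval_matCoords_eq_zero_of_finrank_imageSpan_lt [Infinite K]
    (hg : g ∈ matrixSemiInvariants K n m) {D : ℕ} (hD : g.IsHomogeneous D) (hD0 : 0 < D)
    {v : Fin m → Matrix (Fin n) (Fin n) K} {U : Submodule K (Fin n → K)}
    (hU : Module.finrank K (imageSpan v U) < Module.finrank K U) :
    aeval (matCoords v) g = 0 := by
  obtain ⟨CU, RU, hRU, hCU⟩ := exists_matrix_mul_eq_one_and_range_eq U rfl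
  obtain ⟨CW, RW, hRW, hCW⟩ := exists_matrix_mul_eq_one_and_range_eq (imageSpan v U) rfl
  have hproj : ∀ k, CW * RW * v k * (CU * RU) = v k * (CU * RU) := fun k => by
    have hrange : LinearMap.range (v k * CU).mulVecLin ≤ LinearMap.range CW.mulVecLin := by
      rw [mulVecLin_mul, LinearMap.range_comp, hCU, hCW]
      exact le_iSup (fun k => U.map (v k).mulVecLin) k
    rw [← Matrix.mul_assoc, Matrix.mul_assoc _ (v k), mul_mul_eq_of_range_le hRW hrange,
      Matrix.mul_assoc]
  obtain ⟨P, hP⟩ := exists_eval_eq_aeval_matCoords_add_smul g v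
    (fun k => CW * RW * v k - v k * (CU * RU)) (Polynomial.X ^ n - 1)
  refine eq_zero_of_forall_pow_mul_eval_eq (P := P)
    (mul_pos (Nat.sub_pos_of_lt hU) hD0).ne' fun s hs => ?_
  have hact := aeval_matCoords_mul_mul_of_det_eq_pow hg hD
    (pow_ne_zero (Module.finrank K (imageSpan v U)) hs)
    (pow_ne_zero (Module.finrank K U) (inv_ne_zero hs))
    (A := 1 + (s ^ n - 1) • (CW * RW)) (B := 1 + ((s ^ n)⁻¹ - 1) • (CU * RU))
    (by rw [det_one_add_smul_mul_of_mul_eq_one hRW, Fintype.card_fin, pow_right_comm])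
    (by rw [det_one_add_smul_mul_of_mul_eq_one hRU, Fintype.card_fin, ← inv_pow, pow_right_comm]) v
  simp only [one_add_smul_mul_mul_one_add_inv_smul (hproj _) (pow_ne_zero n hs)] at hact
  have hcancel : s ^ (Module.finrank K U - Module.finrank K (imageSpan v U)) *
      (s ^ Module.finrank K (imageSpan v U) * s⁻¹ ^ Module.finrank K U) = 1 := by
    rw [← mul_assoc, ← pow_add, Nat.sub_add_cancel hU.le, ← mul_pow, mul_inv_cancel₀ hs, one_pow]
  rw [hP]
  simp only [Polynomial.eval_sub, Polynomial.eval_pow, Polynomial.eval_X, Polynomial.eval_one]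
  rw [hact, pow_mul, ← mul_assoc, ← mul_pow, hcancel, one_pow, one_mul]

end SemiInvariants

section HomogeneousReduction

variable {K σ τ : Type*} [Field K]

theorem homogeneousComponent_aeval {D : ℕ} (hD : D ≠ 0) {F : τ → MvPolynomial σ K}
    (hF : ∀ i, (F i).IsHomogeneous D) (p : MvPolynomial τ K) (q : ℕ) :
    homogeneousComponent (D * q) (aeval F p) = aeval F (homogeneousComponent q p) := by
  have hcomp : ∀ k, homogeneousComponent (D * q) (aeval F (homogeneousComponent k p)) =
      if k = q then aeval F (homogeneousComponent k p) else 0 := fun k => by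
    rw [homogeneousComponent_of_mem ((homogeneousComponent_isHomogeneous k p).aeval F hF)]
    simp only [Nat.mul_right_inj hD, eq_comm (a := q)]
  conv_lhs => rw [← sum_homogeneousComponent p, map_sum, map_sum]
  simp only [hcomp, Finset.sum_ite_eq', Finset.mem_range]
  split_ifs with hq
  · rfl
  · rw [homogeneousComponent_eq_zero _ _ (by lia), map_zero]

theorem exists_isHomogeneous_aeval_eq_zero {D : ℕ} (hD : D ≠ 0) {F : τ → MvPolynomial σ K}
    (hF : ∀ i, (F i).IsHomogeneous D) (hdep : ¬ AlgebraicIndependent K F) :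
    ∃ q ≠ 0, ∃ p : MvPolynomial τ K, p ≠ 0 ∧ p.IsHomogeneous q ∧ aeval F p = 0 := by
  rw [algebraicIndependent_iff] at hdep
  push Not at hdep
  obtain ⟨p, hp, hp0⟩ := hdep
  have hcomp : ∀ q, aeval F (homogeneousComponent q p) = 0 := fun q => by
    rw [← homogeneousComponent_aeval hD hF, hp, map_zero]
  obtain ⟨q, hq⟩ : ∃ q, homogeneousComponent q p ≠ 0 := by
    by_contra! hzero
    exact hp0 (sum_homogeneousComponent p ▸ Finset.sum_eq_zero fun i _ => hzero i)
  refine ⟨q, ?_, _, hq, homogeneousComponent_isHomogeneous q p, hcomp q⟩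
  rintro rfl
  have hconst := hcomp 0
  rw [homogeneousComponent_zero] at hq hconst
  rw [aeval_C, MvPolynomial.algebraMap_eq] at hconst
  rw [Ne, C_eq_zero] at hq
  exact hq (C_eq_zero.1 hconst)

-- Take a homogeneous relation `p` of the `F i` and a point `c` with `p c ≠ 0`. A common zero `v` of
-- the `c j • F i - c i • F j` has `F v` proportional to `c`, and `p (F v) = 0` forces `F v = 0`.
theorem exists_forall_aeval_eq_zero_of_not_algebraicIndependent [Infinite K] {D N : ℕ} (hD : D ≠ 0)
    {F : Fin (N + 1) → MvPolynomial σ K} (hF : ∀ i, (F i).IsHomogeneous D)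
    (hdep : ¬ AlgebraicIndependent K F) :
    ∃ (j : Fin (N + 1)) (c : Fin N → K), ∀ v : σ → K,
      (∀ i, aeval v (F (j.succAbove i) - c i • F j) = 0) → ∀ i, aeval v (F i) = 0 := by
  obtain ⟨q, hq, p, hp0, hpq, hp⟩ := exists_isHomogeneous_aeval_eq_zero hD hF hdep
  obtain ⟨c, hc⟩ : ∃ c : Fin (N + 1) → K, aeval c p ≠ 0 := by
    by_contra! hzero
    exact hp0 (MvPolynomial.funext fun c => by rw [map_zero, ← coe_aeval_eq_eval]; exact hzero c)
  obtain ⟨j, hj⟩ : ∃ j, c j ≠ 0 := by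
    by_contra! hzero
    have hc0 : c = (0 : K) • c := by rw [zero_smul, show c = 0 from _root_.funext hzero]
    exact hc (by rw [hc0, aeval_smul_of_isHomogeneous hpq, zero_pow hq, zero_mul])
  refine ⟨j, fun i => c (j.succAbove i) / c j, fun v hv => ?_⟩
  have hprop : (fun i => aeval v (F i)) = (aeval v (F j) / c j) • c := by
    funext i
    rcases eq_or_ne i j with rfl | hij
    · exact (div_mul_cancel₀ _ hj).symm
    · obtain ⟨k, rfl⟩ := Fin.exists_succAbove_eq hij
      have hk := hv k
      rw [map_sub, map_smul, sub_eq_zero, smul_eq_mul] at hk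
      rw [hk, Pi.smul_apply, smul_eq_mul]
      ring
  have hrel : (aeval v (F j) / c j) ^ q * aeval c p = 0 := by
    rw [← aeval_smul_of_isHomogeneous hpq, ← hprop, ← comp_aeval_apply, hp, map_zero]
  have hscalar := eq_zero_of_pow_eq_zero ((mul_eq_zero.1 hrel).resolve_right hc)
  intro i
  rw [congrFun hprop i, hscalar, zero_smul, Pi.zero_apply]

theorem exists_algebraicIndependent_forall_aeval_fin_eq_zero [Infinite K] {D : ℕ} (hD : D ≠ 0)
    {W : Submodule K (MvPolynomial σ K)} (hW : W ≤ homogeneousSubmodule σ K D) {N : ℕ}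
    (F : Fin N → MvPolynomial σ K) (hF : ∀ i, F i ∈ W) :
    ∃ (e : ℕ) (h : Fin e → MvPolynomial σ K), (∀ i, h i ∈ W) ∧ AlgebraicIndependent K h ∧
      ∀ v : σ → K, (∀ i, aeval v (h i) = 0) → ∀ i, aeval v (F i) = 0 := by
  induction N with
  | zero =>
    exact ⟨0, F, hF, algebraicIndependent_empty_type_iff.2 (C_injective σ K), fun _ hv => hv⟩
  | succ N ih =>
    by_cases hind : AlgebraicIndependent K F
    · exact ⟨N + 1, F, hF, hind, fun _ hv => hv⟩
    obtain ⟨j, c, hjc⟩ :=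
      exists_forall_aeval_eq_zero_of_not_algebraicIndependent hD (fun i => hW (hF i)) hind
    obtain ⟨e, h, hh, hind', hv⟩ := ih (fun i => F (j.succAbove i) - c i • F j)
      fun i => sub_mem (hF _) (W.smul_mem _ (hF j))
    exact ⟨e, h, hh, hind', fun v hv0 => hjc v (hv v hv0)⟩

theorem exists_algebraicIndependent_forall_aeval_eq_zero [Infinite K] {D : ℕ} (hD : D ≠ 0)
    {W : Submodule K (MvPolynomial σ K)} (hW : W ≤ homogeneousSubmodule σ K D) (hfg : W.FG) :
    ∃ (e : ℕ) (h : Fin e → MvPolynomial σ K), (∀ i, h i ∈ W) ∧ AlgebraicIndependent K h ∧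
      ∀ v : σ → K, (∀ i, aeval v (h i) = 0) → ∀ p ∈ W, aeval v p = 0 := by
  obtain ⟨N, F, rfl⟩ := Submodule.fg_iff_exists_fin_generating_family.1 hfg
  obtain ⟨e, h, hh, hind, hv⟩ := exists_algebraicIndependent_forall_aeval_fin_eq_zero hD hW F
    fun i => Submodule.subset_span ⟨i, rfl⟩
  refine ⟨e, h, hh, hind, fun v hv0 => ?_⟩
  have hle : Submodule.span K (Set.range F) ≤ LinearMap.ker (aeval v).toLinearMap :=
    Submodule.span_le.2 (Set.range_subset_iff.2 (hv v hv0))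
  exact hle

end HomogeneousReduction

section HomogeneousParameters

variable {K σ : Type*} [Field K] [Infinite K] [Finite σ]

theorem exists_fin_forall_aeval_eq_zero_iff (R : Subalgebra K (MvPolynomial σ K)) {r : ℕ}
    (hr : ringKrullDim R = r) {D : ℕ} (hD : D ≠ 0) :
    ∃ f : Fin r → MvPolynomial σ K, (∀ i, f i ∈ R ∧ (f i).IsHomogeneous D) ∧
      ∀ v : σ → K, (∀ i, aeval v (f i) = 0) ↔ ∀ g ∈ R, g.IsHomogeneous D → aeval v g = 0 := by
  obtain ⟨e, h, hh, hind, hv⟩ := exists_algebraicIndependent_forall_aeval_eq_zero hD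
    (W := homogeneousSubmodule σ K D ⊓ Subalgebra.toSubmodule R) inf_le_left
    (.of_le (homogeneousSubmodule_fg σ K D) inf_le_left)
  have her : e ≤ r := by
    have hle := natCast_le_ringKrullDim_subalgebra R (x := fun i => ⟨h i, (hh i).2⟩)
      (AlgebraicIndependent.of_comp R.val hind)
    rw [hr] at hle
    exact_mod_cast hle
  let f : Fin r → MvPolynomial σ K := Function.extend (Fin.castLE her) h 0
  have hfh : ∀ i, f (Fin.castLE her i) = h i := (Fin.castLE_injective her).extend_apply h 0
  have hf : ∀ i, f i ∈ R ∧ (f i).IsHomogeneous D := fun i => by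
    by_cases hi : ∃ j, Fin.castLE her j = i
    · obtain ⟨j, rfl⟩ := hi
      rw [hfh]
      exact (hh j).symm
    · rw [show f i = 0 from Function.extend_apply' _ _ _ hi]
      exact ⟨R.zero_mem, isHomogeneous_zero σ K D⟩
  refine ⟨f, hf, fun v => ⟨fun hv0 g hg hgD => ?_, fun hv0 i => hv0 _ (hf i).1 (hf i).2⟩⟩
  exact hv v (fun i => hfh i ▸ hv0 _) g ⟨hgD, hg⟩

end HomogeneousParameters

section DeterminantalSemiInvariants

theorem blowUp_mul_mul {ι a b a' b' α β F : Type*} [Fintype ι] [Fintype a] [Fintype b] [Fintype α]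
    [Fintype β] [DecidableEq α] [DecidableEq β] [CommRing F] (A : Matrix a' a F)
    (X : ι → Matrix a b F) (B : Matrix b b' F) (T : ι → Matrix α β F) :
    blowUp (fun k => A * X k * B) T =
      (A ⊗ₖ (1 : Matrix α α F)) * blowUp X T * (B ⊗ₖ (1 : Matrix β β F)) := by
  simp only [blowUp_apply, Matrix.mul_sum, Matrix.sum_mul, ← mul_kronecker_mul, Matrix.one_mul,
    Matrix.mul_one]

variable {K : Type} [Field K] {n m d : ℕ}

/-- The determinantal semi-invariant `v ↦ det (∑ k, v k ⊗ T k)` attached to matrices `T k`, as a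
polynomial in the entries of `v`. -/
noncomputable def detSemiInvariant (T : Fin m → Matrix (Fin d) (Fin d) K) :
    MvPolynomial (Fin m × Fin n × Fin n) K :=
  (blowUp (fun k => of fun i j => X (k, i, j)) fun k => (T k).map C).det

theorem aeval_matCoords_detSemiInvariant (T : Fin m → Matrix (Fin d) (Fin d) K)
    (v : Fin m → Matrix (Fin n) (Fin n) K) :
    aeval (matCoords v) (detSemiInvariant T) = (blowUp v T).det := by
  rw [detSemiInvariant, AlgHom.map_det]
  congr 1
  ext p q
  simp [blowUp_apply_apply, matCoords]

theorem isHomogeneous_detSemiInvariant (T : Fin m → Matrix (Fin d) (Fin d) K) :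
    (detSemiInvariant T : MvPolynomial (Fin m × Fin n × Fin n) K).IsHomogeneous (n * d) := by
  have hcard : ∑ _p : Fin n × Fin d, 1 = n * d := by simp
  rw [detSemiInvariant, det_apply]
  refine IsHomogeneous.sum _ _ _ fun s _ => ?_
  refine (homogeneousSubmodule _ K (n * d)).smul_mem_iff' _ |>.2 ?_
  rw [mem_homogeneousSubmodule, ← hcard]
  refine IsHomogeneous.prod _ _ _ fun p _ => ?_
  rw [blowUp_apply_apply]
  exact IsHomogeneous.sum _ _ _ fun k _ => (isHomogeneous_X K _).mul (isHomogeneous_C _ _)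

theorem detSemiInvariant_mem_matrixSemiInvariants (T : Fin m → Matrix (Fin d) (Fin d) K) :
    detSemiInvariant T ∈ matrixSemiInvariants K n m := by
  refine mem_matrixSemiInvariants_iff.2 fun A B v => ?_
  rw [aeval_matCoords_detSemiInvariant, aeval_matCoords_detSemiInvariant, blowUp_mul_mul, det_mul,
    det_mul, det_kronecker, det_kronecker, A.2, B.2]
  simp

end DeterminantalSemiInvariants

theorem forall_aeval_matCoords_eq_zero_iff {K : Type} [Field K] [Infinite K] {n m : ℕ} (hn : 2 ≤ n)
    (v : Fin m → Matrix (Fin n) (Fin n) K) :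
    (∀ g ∈ matrixSemiInvariants K n m, g.IsHomogeneous (n * (n - 1)) →
        aeval (matCoords v) g = 0) ↔
      ∀ g ∈ matrixSemiInvariants K n m, ∀ d, 0 < d → g.IsHomogeneous d →
        aeval (matCoords v) g = 0 := by
  have hD : 0 < n * (n - 1) := Nat.mul_pos (by lia) (by lia)
  refine ⟨fun hv g hg d hd hgd => ?_, fun hv g hg hgD => hv g hg _ hD hgD⟩
  by_cases hshrunk : ∃ U : Submodule K (Fin n → K),
      Module.finrank K (imageSpan v U) < Module.finrank K U
  · obtain ⟨U, hU⟩ := hshrunk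
    exact aeval_matCoords_eq_zero_of_finrank_imageSpan_lt hg hgd hd hU
  · push Not at hshrunk
    obtain ⟨T, hT⟩ := exists_det_blowUp_ne_zero (d := n - 1) hshrunk (by simpa using hn)
      (by rw [Fintype.card_fin]; lia)
    rw [← aeval_matCoords_detSemiInvariant] at hT
    exact absurd (hv _ (detSemiInvariant_mem_matrixSemiInvariants T)
      (isHomogeneous_detSemiInvariant T)) hT

theorem stmt_18_general (K : Type) [Field K] [Infinite K] (n m : ℕ) (hn : 2 ≤ n) (r : ℕ)
    (hr : ringKrullDim ↥(matrixSemiInvariants K n m) = r) :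
    ∃ f : Fin r → MvPolynomial (Fin m × Fin n × Fin n) K,
      (∀ i, f i ∈ matrixSemiInvariants K n m ∧ (f i).IsHomogeneous (n * (n - 1))) ∧
        ∀ v : Fin m → Matrix (Fin n) (Fin n) K,
          (∀ i, aeval (matCoords v) (f i) = 0) ↔
            ∀ g ∈ matrixSemiInvariants K n m, ∀ d, 0 < d → g.IsHomogeneous d →
              aeval (matCoords v) g = 0 := by
  have hD : n * (n - 1) ≠ 0 := mul_ne_zero (by lia) (by lia)
  obtain ⟨f, hf, hv⟩ := exists_fin_forall_aeval_eq_zero_iff (matrixSemiInvariants K n m) hr hD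
  exact ⟨f, hf, fun v => (hv (matCoords v)).trans (forall_aeval_matCoords_eq_zero_iff hn v)⟩

/-- **Derksen–Makam.** For `n ≥ 2`, with `r` the Krull dimension of `R(n,m)`,
there exist `r` homogeneous semi-invariants of degree `n(n-1)` whose common zero set equals
the null cone, i.e. the common zero set of all homogeneous semi-invariants of positive
degree. -/
theorem stmt_18 (K : Type) [Field K] [IsAlgClosed K] (n m : ℕ) (hn : 2 ≤ n) (hm : 1 ≤ m)
    (r : ℕ) (hr : ringKrullDim ↥(matrixSemiInvariants K n m) = r) :
    ∃ f : Fin r → MvPolynomial (Fin m × Fin n × Fin n) K,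
      (∀ i, f i ∈ matrixSemiInvariants K n m ∧ (f i).IsHomogeneous (n * (n - 1))) ∧
        ∀ v : Fin m → Matrix (Fin n) (Fin n) K,
          (∀ i, aeval (matCoords v) (f i) = 0) ↔
            ∀ g ∈ matrixSemiInvariants K n m, ∀ d, 0 < d → g.IsHomogeneous d →
              aeval (matCoords v) g = 0 := by
  have : Infinite K := IsAlgClosed.instInfinite
  exact stmt_18_general K n m hn r hr
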